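/- arXiv:2006.00240 — 4 statements merged into one kernel-verified Lean document; each statement's English description precedes it below -/
import Mathlib

section
/- Let n ≥ 1, β ∈ (0,n), and let φ be a doubling Young function satisfying C_β := sup_{t>0} (t^β/φ(t)) ∫_0^t φ(s) s^{-β-1} ds < ∞. Suppose a domain Ω ⊂ ℝⁿ satisfies the imbedding: there exists C > 0 such that inf_{c∈ℝ} ‖u − c‖_{L^{φ^{n/(n−β)}}(Ω)} ≤ C ‖u‖_{Ẇ^{β,φ}(Ω)} for all u ∈ Ẇ^{β,φ}(Ω). Then Ω is Ahlfors n-regular. -/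
/-!
The imbedding is tested on Lipschitz cutoffs of balls. Write `m(r) = |B(x,r) ∩ Ω|` and let `u` be
the cutoff that is `1` on `B(x,s)` and `0` off `B(x,r)`, with `ρ = r - s`.

Since `|u(y) - u(z)| ≤ min(1, |y - z| / ρ)` and only pairs meeting `B(x,r)` contribute, polar
coordinates and `C_β < ∞` bound the energy of `u` with Luxemburg parameter `1/t` by
`2 Q m(r) ρ^{-β} φ(t)`. With `t` chosen so that this bound equals `1`, the imbedding provides a
constant `c` with `∫_Ω φ(t|u - c| / (2C))^{n/(n-β)} ≤ 1`. As `c` is at distance at least `1/2` from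
`0` or from `1`, doubling yields `ρ ≤ A m(r)^{1/n}` as soon as both `B(x,s) ∩ Ω` and `Ω \ B(x,r)`
have measure at least `m(r) / 2`.

Consequently, shrinking a radius `s` by `2 A m(s)^{1/n}` halves the measure of the ball, and a
geometric series gives `r ≤ D m(r)^{1/n}` whenever `Ω` has enough mass outside `B(x,r)`.

In the remaining case `B(x,r)` carries most of the mass of `Ω`, so `|Ω|` is finite. Of two disjoint
balls of radius `|y - z| / 2` around `y, z ∈ Ω`, the lighter one leaves enough mass outside, whence
`diam Ω ≤ 2 D |Ω|^{1/n}`, and `r < 2 diam Ω` concludes.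
-/

open MeasureTheory Metric Set Filter
open scoped ENNReal NNReal Topology Classical

noncomputable section

/-- `φ` is a Young function: convex, continuous on `[0,∞)`, `φ(0)=0`, `φ(t)>0` for `t>0`. -/
def IsYoung (φ : ℝ → ℝ) : Prop :=
  ContinuousOn φ (Set.Ici 0) ∧ ConvexOn ℝ (Set.Ici 0) φ ∧ φ 0 = 0 ∧ ∀ t > 0, 0 < φ t

/-- `φ` is doubling with constant `K > 1`: `φ(2t) ≤ K φ(t)` for all `t > 0`. -/
def IsDoubling (φ : ℝ → ℝ) (K : ℝ) : Prop :=
  1 < K ∧ ∀ t > 0, φ (2 * t) ≤ K * φ t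

/-- The (generalized) inverse of a Young function. -/
def yInv (φ : ℝ → ℝ) (y : ℝ) : ℝ :=
  sInf {t : ℝ | 0 ≤ t ∧ y ≤ φ t}

/-- `sup_{t>0} (t^β/φ(t)) ∫_0^t φ(s) s^{-β-1} ds ≤ M`. -/
def CbetaLE (β : ℝ) (φ : ℝ → ℝ) (M : ℝ) : Prop :=
  ∀ t > 0,
    ENNReal.ofReal (t ^ β / φ t) *
        (∫⁻ s in Set.Ioc (0 : ℝ) t, ENNReal.ofReal (φ s / s ^ (β + 1))) ≤
      ENNReal.ofReal M

/-- The condition `C_β := sup_{t>0} (t^β/φ(t)) ∫_0^t φ(s) s^{-β-1} ds < ∞`. -/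
def CbetaFinite (β : ℝ) (φ : ℝ → ℝ) : Prop :=
  ∃ M : ℝ, CbetaLE β φ M

/-- The double integral `∫_Ω ∫_Ω φ(|u(x)-u(y)|/λ) |x-y|^{-n-β} dx dy`. -/
def fracIntegral (n : ℕ) (β : ℝ) (φ : ℝ → ℝ) (Ω : Set (EuclideanSpace ℝ (Fin n)))
    (u : EuclideanSpace ℝ (Fin n) → ℝ) (lam : ℝ) : ℝ≥0∞ :=
  ∫⁻ x in Ω, ∫⁻ y in Ω,
    ENNReal.ofReal (φ (|u x - u y| / lam) / dist x y ^ ((n : ℝ) + β))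

/-- The fractional Orlicz–Sobolev (Luxemburg-type) seminorm `‖u‖_{Ẇ^{β,φ}(Ω)}`,
valued in `[0,∞]` (it is `∞` iff no admissible `λ` exists). -/
def fracNorm (n : ℕ) (β : ℝ) (φ : ℝ → ℝ) (Ω : Set (EuclideanSpace ℝ (Fin n)))
    (u : EuclideanSpace ℝ (Fin n) → ℝ) : ℝ≥0∞ :=
  sInf {lam : ℝ≥0∞ | 0 < lam ∧ lam ≠ ∞ ∧ fracIntegral n β φ Ω u lam.toReal ≤ 1}

/-- `u ∈ Ẇ^{β,φ}(Ω)` : locally integrable on `Ω` with finite seminorm. -/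
def MemW (n : ℕ) (β : ℝ) (φ : ℝ → ℝ) (Ω : Set (EuclideanSpace ℝ (Fin n)))
    (u : EuclideanSpace ℝ (Fin n) → ℝ) : Prop :=
  LocallyIntegrableOn u Ω ∧ fracNorm n β φ Ω u ≠ ∞

/-- The Orlicz (Luxemburg) norm `‖u‖_{L^ψ(Ω)}`, valued in `[0,∞]`. -/
def luxNorm (n : ℕ) (ψ : ℝ → ℝ) (Ω : Set (EuclideanSpace ℝ (Fin n)))
    (u : EuclideanSpace ℝ (Fin n) → ℝ) : ℝ≥0∞ :=
  sInf {lam : ℝ≥0∞ | 0 < lam ∧ lam ≠ ∞ ∧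
    (∫⁻ x in Ω, ENNReal.ofReal (ψ (|u x| / lam.toReal))) ≤ 1}

/-- `Ω` is Ahlfors `n`-regular: `|B(x,r) ∩ Ω| ≥ θ rⁿ` for all `x ∈ Ω`, `0 < r < 2 diam Ω`. -/
def AhlforsRegular (n : ℕ) (Ω : Set (EuclideanSpace ℝ (Fin n))) : Prop :=
  ∃ θ > (0 : ℝ), ∀ x ∈ Ω, ∀ r : ℝ, 0 < r → ENNReal.ofReal r < 2 * EMetric.diam Ω →
    ENNReal.ofReal (θ * r ^ n) ≤ volume (Metric.ball x r ∩ Ω)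

/-- `Ω` is a `Ẇ^{β,φ}`-extension domain: there are `C > 0` and a linear operator `E`
from `Ẇ^{β,φ}(Ω)` to `Ẇ^{β,φ}(ℝⁿ)` with `Eu = u` a.e. on `Ω` and
`‖Eu‖_{Ẇ^{β,φ}(ℝⁿ)} ≤ C ‖u‖_{Ẇ^{β,φ}(Ω)}`. -/
def IsExtensionDomain (n : ℕ) (β : ℝ) (φ : ℝ → ℝ)
    (Ω : Set (EuclideanSpace ℝ (Fin n))) : Prop :=
  ∃ C > (0 : ℝ), ∃ E : (EuclideanSpace ℝ (Fin n) → ℝ) → (EuclideanSpace ℝ (Fin n) → ℝ),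
    (∀ u v, MemW n β φ Ω u → MemW n β φ Ω v → E (u + v) = E u + E v) ∧
    (∀ (c : ℝ) (u), MemW n β φ Ω u → E (c • u) = c • E u) ∧
    (∀ u, MemW n β φ Ω u →
      MemW n β φ Set.univ (E u) ∧
      (∀ᵐ x ∂(volume.restrict Ω), E u x = u x) ∧
      fracNorm n β φ Set.univ (E u) ≤ ENNReal.ofReal C * fracNorm n β φ Ω u)

end

/-! ### Young functions -/

theorem IsYoung.map_mul_le {φ : ℝ → ℝ} (hφ : IsYoung φ) {a t : ℝ} (ha₀ : 0 ≤ a) (ha₁ : a ≤ 1)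
    (ht : 0 ≤ t) : φ (a * t) ≤ a * φ t := by
  obtain ⟨-, hconv, hzero, -⟩ := hφ
  simpa [hzero] using hconv.2 (mem_Ici.2 le_rfl) (mem_Ici.2 ht) (sub_nonneg.2 ha₁) ha₀ (by ring)

theorem IsYoung.nonneg {φ : ℝ → ℝ} (hφ : IsYoung φ) {t : ℝ} (ht : 0 ≤ t) : 0 ≤ φ t := by
  obtain ⟨-, -, hzero, hpos⟩ := hφ
  rcases ht.eq_or_lt with rfl | ht
  exacts [hzero.ge, (hpos t ht).le]

theorem IsYoung.monotoneOn {φ : ℝ → ℝ} (hφ : IsYoung φ) : MonotoneOn φ (Ici 0) := by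
  intro x hx y hy hxy
  rcases (mem_Ici.1 hy).eq_or_lt with rfl | hy₀
  · rw [hxy.antisymm hx]
  · have hxy₁ : x / y ≤ 1 := (div_le_one hy₀).2 hxy
    calc φ x = φ (x / y * y) := by rw [div_mul_cancel₀ _ hy₀.ne']
      _ ≤ x / y * φ y := hφ.map_mul_le (div_nonneg hx hy₀.le) hxy₁ hy
      _ ≤ φ y := mul_le_of_le_one_left (hφ.nonneg hy) hxy₁

theorem IsYoung.monotoneOn_rpow {φ : ℝ → ℝ} (hφ : IsYoung φ) {p : ℝ} (hp : 0 ≤ p) :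
    MonotoneOn (fun t => φ t ^ p) (Ici 0) := fun _ hx _ hy hxy =>
  Real.rpow_le_rpow (hφ.nonneg hx) (hφ.monotoneOn hx hy hxy) hp

theorem IsYoung.exists_pos_eq {φ : ℝ → ℝ} (hφ : IsYoung φ) {y : ℝ} (hy : 0 < y) :
    ∃ t > 0, φ t = y := by
  obtain ⟨hcont, -, hzero, hpos⟩ := id hφ
  set b : ℝ := max 1 (y / φ 1)
  have hb : 0 < b := one_pos.trans_le (le_max_left _ _)
  have hyb : y ≤ φ b := by
    have hgrowth : φ 1 ≤ b⁻¹ * φ b := by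
      simpa [hb.ne'] using hφ.map_mul_le (inv_nonneg.2 hb.le)
        (inv_le_one_of_one_le₀ (le_max_left 1 (y / φ 1))) hb.le
    calc y ≤ b * φ 1 := (div_le_iff₀ (hpos 1 one_pos)).1 (le_max_right _ _)
      _ ≤ φ b := (le_inv_mul_iff₀ hb).1 hgrowth
  obtain ⟨t, ht, rfl⟩ := intermediate_value_Icc hb.le (hcont.mono Icc_subset_Ici_self)
    ⟨hzero.trans_le hy.le, hyb⟩
  exact ⟨t, ht.1.lt_of_ne (by rintro rfl; exact hy.ne' hzero), rfl⟩

theorem IsDoubling.map_two_pow_mul_le {φ : ℝ → ℝ} {K : ℝ} (hK : IsDoubling φ K) (k : ℕ) {t : ℝ}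
    (ht : 0 < t) : φ (2 ^ k * t) ≤ K ^ k * φ t := by
  have hK₀ : 0 < K := one_pos.trans hK.1
  induction k with
  | zero => simp
  | succ k ih =>
    calc φ (2 ^ (k + 1) * t) = φ (2 * (2 ^ k * t)) := by ring_nf
      _ ≤ K * φ (2 ^ k * t) := hK.2 _ (by positivity)
      _ ≤ K * (K ^ k * φ t) := by gcongr
      _ = K ^ (k + 1) * φ t := by ring

theorem IsDoubling.exists_map_le_mul_map_div {φ : ℝ → ℝ} {K : ℝ} (hK : IsDoubling φ K)
    (hφ : MonotoneOn φ (Ici 0)) {C : ℝ} (hC : 0 < C) :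
    ∃ L > 0, ∀ t > 0, φ t ≤ L * φ (t / C) := by
  obtain ⟨k, hk⟩ := pow_unbounded_of_one_lt C one_lt_two
  refine ⟨K ^ k, pow_pos (one_pos.trans hK.1) k, fun t ht => ?_⟩
  have htC : 0 < t / C := div_pos ht hC
  have hle : t ≤ 2 ^ k * (t / C) := by
    calc t = C * (t / C) := by field_simp
      _ ≤ 2 ^ k * (t / C) := by gcongr
  exact (hφ ht.le (ht.le.trans hle) hle).trans (hK.map_two_pow_mul_le k htC)

/-! ### Radial integrals -/

theorem lintegral_fun_norm_addHaar {E : Type*} [NormedAddCommGroup E] [NormedSpace ℝ E]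
    [FiniteDimensional ℝ E] [Nontrivial E] [MeasurableSpace E] [BorelSpace E] (μ : Measure E)
    [μ.IsAddHaarMeasure] {g : ℝ → ℝ≥0∞} (hg : Measurable ((Ioi 0).domRestrict g)) :
    ∫⁻ v, g ‖v‖ ∂μ = Module.finrank ℝ E * μ (ball 0 1) *
      ∫⁻ s in Ioi 0, ENNReal.ofReal (s ^ (Module.finrank ℝ E - 1)) * g s := by
  set d := Module.finrank ℝ E
  calc ∫⁻ v, g ‖v‖ ∂μ
      = ∫⁻ v : ({0}ᶜ : Set E), g ‖(v : E)‖ ∂μ.comap (↑) := by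
        rw [lintegral_subtype_comap (measurableSet_singleton 0).compl fun v : E => g ‖v‖,
          restrict_compl_singleton]
    _ = ∫⁻ p : sphere (0 : E) 1 × Ioi (0 : ℝ), (Ioi 0).domRestrict g p.2
          ∂μ.toSphere.prod (.volumeIoiPow (d - 1)) := by
        simpa only [domRestrict_apply, homeomorphUnitSphereProd_apply_snd_coe] using
          μ.measurePreserving_homeomorphUnitSphereProd.lintegral_comp_emb
            (Homeomorph.measurableEmbedding _) fun p => (Ioi 0).domRestrict g p.2
    _ = d * μ (ball 0 1) * ∫⁻ s, (Ioi 0).domRestrict g s ∂.volumeIoiPow (d - 1) := by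
        rw [lintegral_prod _ (by fun_prop)]
        simp only [lintegral_const, μ.toSphere_apply_univ, mul_comm, d]
    _ = d * μ (ball 0 1) * ∫⁻ s in Ioi 0, ENNReal.ofReal (s ^ (d - 1)) * g s := by
        rw [Measure.volumeIoiPow,
          lintegral_withDensity_eq_lintegral_mul _ (by fun_prop) hg,
          ← lintegral_subtype_comap measurableSet_Ioi]
        rfl

theorem setLIntegral_comp_mul_left {a : ℝ} (ha : a ≠ 0) (f : ℝ → ℝ≥0∞) (s : Set ℝ) :
    ∫⁻ x in (a * ·) ⁻¹' s, f (a * x) = ENNReal.ofReal |a⁻¹| * ∫⁻ x in s, f x := by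
  have hemb : MeasurableEmbedding (a * · : ℝ → ℝ) :=
    (Homeomorph.mulLeft₀ a ha).measurableEmbedding
  rw [← hemb.lintegral_map, ← hemb.restrict_map, Real.map_volume_mul_left ha,
    Measure.restrict_smul, lintegral_smul_measure, smul_eq_mul]

theorem setLIntegral_Ioi_one_div_rpow {β ρ : ℝ} (hβ : 0 < β) (hρ : 0 < ρ) :
    ∫⁻ s in Ioi ρ, ENNReal.ofReal (1 / s ^ (β + 1)) = ENNReal.ofReal (1 / (β * ρ ^ β)) := by
  have hexp : -(β + 1) < -1 := by linarith
  have hpos {s : ℝ} (hs : s ∈ Ioi ρ) : 0 ≤ s := hρ.le.trans (le_of_lt hs)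
  calc ∫⁻ s in Ioi ρ, ENNReal.ofReal (1 / s ^ (β + 1))
      = ∫⁻ s in Ioi ρ, ENNReal.ofReal (s ^ (-(β + 1))) :=
        setLIntegral_congr_fun measurableSet_Ioi fun s hs => by
          simp only [Real.rpow_neg (hpos hs), one_div]
    _ = ENNReal.ofReal (∫ s in Ioi ρ, s ^ (-(β + 1))) := by
        rw [ofReal_integral_eq_lintegral_ofReal (integrableOn_Ioi_rpow_of_lt hexp hρ)]
        exact ae_restrict_of_forall_mem measurableSet_Ioi fun s hs =>
          Real.rpow_nonneg (hpos hs) _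
    _ = ENNReal.ofReal (1 / (β * ρ ^ β)) := by
        rw [integral_Ioi_rpow_of_lt hexp hρ, show -(β + 1) + 1 = -β by ring, Real.rpow_neg hρ.le]
        congr 1
        field_simp

/-! ### The energy of a cutoff -/

theorem CbetaLE.setLIntegral_le {β M t : ℝ} {φ : ℝ → ℝ} (h : CbetaLE β φ M) (ht : 0 < t)
    (hφt : 0 < φ t) :
    ∫⁻ s in Ioc 0 t, ENNReal.ofReal (φ s / s ^ (β + 1)) ≤
      ENNReal.ofReal (M * (φ t / t ^ β)) := by
  have hr : 0 < t ^ β / φ t := by positivity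
  rw [← inv_div (t ^ β), ← div_eq_mul_inv, ENNReal.ofReal_div_of_pos hr,
    ENNReal.le_div_iff_mul_le (by simp [hr]) (by simp), mul_comm]
  exact h t ht

theorem CbetaFinite.exists_nonneg {β : ℝ} {φ : ℝ → ℝ} (h : CbetaFinite β φ) :
    ∃ M ≥ 0, CbetaLE β φ M := by
  obtain ⟨M, hM⟩ := h
  exact ⟨max M 0, le_max_right _ _, fun t ht =>
    (hM t ht).trans (ENNReal.ofReal_le_ofReal (le_max_left _ _))⟩

theorem CbetaLE.setLIntegral_scaled_le {β M ρ t : ℝ} {φ : ℝ → ℝ} (h : CbetaLE β φ M)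
    (hρ : 0 < ρ) (ht : 0 < t) (hφt : 0 < φ t) :
    ∫⁻ s in Ioc 0 ρ, ENNReal.ofReal (φ (t * (s / ρ)) / s ^ (β + 1)) ≤
      ENNReal.ofReal (M * (φ t / ρ ^ β)) := by
  set a : ℝ := t / ρ
  have ha : 0 < a := by positivity
  have hpre : Ioc 0 ρ = (a * ·) ⁻¹' Ioc 0 t := by
    simp [preimage_const_mul_Ioc₀ _ _ ha, a, ht.ne']
  calc ∫⁻ s in Ioc 0 ρ, ENNReal.ofReal (φ (t * (s / ρ)) / s ^ (β + 1))
      = ∫⁻ s in Ioc 0 ρ, ENNReal.ofReal (a ^ (β + 1)) *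
          ENNReal.ofReal (φ (a * s) / (a * s) ^ (β + 1)) := by
        refine setLIntegral_congr_fun measurableSet_Ioc fun s hs => ?_
        have hs₀ : 0 < s := hs.1
        simp only [show t * (s / ρ) = a * s by ring, Real.mul_rpow ha.le hs₀.le]
        rw [← ENNReal.ofReal_mul (by positivity)]
        congr 1
        field_simp
    _ = ENNReal.ofReal (a ^ β) * ∫⁻ s in Ioc 0 t, ENNReal.ofReal (φ s / s ^ (β + 1)) := by
        rw [lintegral_const_mul' _ _ ENNReal.ofReal_ne_top, hpre,
          setLIntegral_comp_mul_left ha.ne' (fun s => ENNReal.ofReal (φ s / s ^ (β + 1))),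
          ← mul_assoc, ← ENNReal.ofReal_mul (by positivity), abs_of_pos (inv_pos.2 ha),
          Real.rpow_add_one ha.ne', mul_inv_cancel_right₀ ha.ne']
    _ ≤ ENNReal.ofReal (a ^ β) * ENNReal.ofReal (M * (φ t / t ^ β)) := by
        gcongr
        exact h.setLIntegral_le ht hφt
    _ = ENNReal.ofReal (M * (φ t / ρ ^ β)) := by
        rw [← ENNReal.ofReal_mul (by positivity), Real.div_rpow ht.le hρ.le]
        congr 1
        field_simp

theorem CbetaLE.setLIntegral_Ioi_truncated_le {β M ρ t : ℝ} {φ : ℝ → ℝ} (h : CbetaLE β φ M)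
    (hM : 0 ≤ M) (hβ : 0 < β) (hρ : 0 < ρ) (ht : 0 < t) (hφt : 0 < φ t) :
    ∫⁻ s in Ioi 0, ENNReal.ofReal (φ (t * min 1 (s / ρ)) / s ^ (β + 1)) ≤
      ENNReal.ofReal ((M + 1 / β) * (φ t / ρ ^ β)) := by
  have hnear : ∫⁻ s in Ioc 0 ρ, ENNReal.ofReal (φ (t * min 1 (s / ρ)) / s ^ (β + 1)) ≤
      ENNReal.ofReal (M * (φ t / ρ ^ β)) := by
    refine (setLIntegral_congr_fun measurableSet_Ioc fun s hs => ?_).trans_le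
      (h.setLIntegral_scaled_le hρ ht hφt)
    simp only [min_eq_right ((div_le_one hρ).2 hs.2)]
  have hfar : ∫⁻ s in Ioi ρ, ENNReal.ofReal (φ (t * min 1 (s / ρ)) / s ^ (β + 1)) =
      ENNReal.ofReal (1 / β * (φ t / ρ ^ β)) := by
    calc ∫⁻ s in Ioi ρ, ENNReal.ofReal (φ (t * min 1 (s / ρ)) / s ^ (β + 1))
        = ∫⁻ s in Ioi ρ, ENNReal.ofReal (φ t) * ENNReal.ofReal (1 / s ^ (β + 1)) :=
          setLIntegral_congr_fun measurableSet_Ioi fun s hs => by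
            simp only [min_eq_left ((one_le_div hρ).2 (le_of_lt hs)), mul_one]
            rw [← ENNReal.ofReal_mul hφt.le, mul_one_div]
      _ = ENNReal.ofReal (1 / β * (φ t / ρ ^ β)) := by
          rw [lintegral_const_mul' _ _ ENNReal.ofReal_ne_top, setLIntegral_Ioi_one_div_rpow hβ hρ,
            ← ENNReal.ofReal_mul hφt.le]
          congr 1
          field_simp
  rw [← Ioc_union_Ioi_eq_Ioi hρ.le, add_mul, ENNReal.ofReal_add (by positivity) (by positivity)]
  exact (lintegral_union_le _ _ _).trans (add_le_add hnear hfar.le)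

/-- The convolution kernel `φ(t · min(1, |v|/ρ)) / |v|^γ`. With `γ = n + β` and `v = y - z` it
dominates the Gagliardo integrand, at Luxemburg parameter `1/t`, of every `1/ρ`-Lipschitz function
with values in `[0,1]`. -/
noncomputable def truncatedKernel {E : Type*} [Norm E] (φ : ℝ → ℝ) (γ ρ t : ℝ) (v : E) : ℝ≥0∞ :=
  ENNReal.ofReal (φ (t * min 1 (‖v‖ / ρ)) / ‖v‖ ^ γ)

theorem IsYoung.continuous_truncation {X : Type*} [TopologicalSpace X] {φ : ℝ → ℝ}
    (hφ : IsYoung φ) {ρ t : ℝ} (hρ : 0 ≤ ρ) (ht : 0 ≤ t) {f : X → ℝ} (hf : Continuous f)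
    (hf₀ : ∀ x, 0 ≤ f x) : Continuous fun x => φ (t * min 1 (f x / ρ)) :=
  hφ.1.comp_continuous (by fun_prop) fun x =>
    mul_nonneg ht (le_min zero_le_one (div_nonneg (hf₀ x) hρ))

theorem IsYoung.measurable_truncatedKernel {E : Type*} [SeminormedAddCommGroup E]
    [MeasurableSpace E] [OpensMeasurableSpace E] {φ : ℝ → ℝ} (hφ : IsYoung φ) (γ : ℝ) {ρ t : ℝ}
    (hρ : 0 ≤ ρ) (ht : 0 ≤ t) : Measurable (truncatedKernel φ γ ρ t : E → ℝ≥0∞) :=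
  ((hφ.continuous_truncation hρ ht continuous_norm norm_nonneg).measurable.div
    (by fun_prop)).ennreal_ofReal

theorem lintegral_truncatedKernel_le {E : Type*} [NormedAddCommGroup E] [NormedSpace ℝ E]
    [FiniteDimensional ℝ E] [Nontrivial E] [MeasurableSpace E] [BorelSpace E] (μ : Measure E)
    [μ.IsAddHaarMeasure] {β M ρ t : ℝ} {φ : ℝ → ℝ} (hφ : IsYoung φ) (h : CbetaLE β φ M)
    (hM : 0 ≤ M) (hβ : 0 < β) (hρ : 0 < ρ) (ht : 0 < t) :
    ∫⁻ v, truncatedKernel φ (Module.finrank ℝ E + β) ρ t v ∂μ ≤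
      ENNReal.ofReal
        (Module.finrank ℝ E * μ.real (ball 0 1) * (M + 1 / β) * (φ t / ρ ^ β)) := by
  set d := Module.finrank ℝ E
  have hd : 1 ≤ d := Module.finrank_pos
  have hmeas : Measurable ((Ioi 0).domRestrict fun s : ℝ =>
      ENNReal.ofReal (φ (t * min 1 (s / ρ)) / s ^ (d + β))) :=
    ((hφ.continuous_truncation hρ.le ht.le continuous_subtype_val
      fun s => (mem_Ioi.1 s.2).le).measurable.div (by fun_prop)).ennreal_ofReal
  have hjacobian {s : ℝ} (hs : 0 < s) : ENNReal.ofReal (s ^ (d - 1)) *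
      ENNReal.ofReal (φ (t * min 1 (s / ρ)) / s ^ (d + β)) =
        ENNReal.ofReal (φ (t * min 1 (s / ρ)) / s ^ (β + 1)) := by
    have hsplit : s ^ (d + β) = s ^ (d - 1) * s ^ (β + 1) := by
      rw [← Real.rpow_natCast, ← Real.rpow_add hs, Nat.cast_sub hd]
      push_cast
      ring_nf
    rw [← ENNReal.ofReal_mul (by positivity), hsplit]
    congr 1
    field_simp
  calc ∫⁻ v, truncatedKernel φ (d + β) ρ t v ∂μ
      = d * μ (ball 0 1) *
          ∫⁻ s in Ioi 0, ENNReal.ofReal (φ (t * min 1 (s / ρ)) / s ^ (β + 1)) := by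
        rw [← setLIntegral_congr_fun measurableSet_Ioi fun s hs => hjacobian hs]
        exact lintegral_fun_norm_addHaar μ hmeas
    _ ≤ d * μ (ball 0 1) * ENNReal.ofReal ((M + 1 / β) * (φ t / ρ ^ β)) := by
        gcongr
        exact h.setLIntegral_Ioi_truncated_le hM hβ hρ ht (hφ.2.2.2 t ht)
    _ = ENNReal.ofReal (d * μ.real (ball 0 1) * (M + 1 / β) * (φ t / ρ ^ β)) := by
        rw [mul_assoc _ (M + 1 / β),
          ENNReal.ofReal_mul (p := d * μ.real (ball 0 1)) (by positivity),
          ENNReal.ofReal_mul (p := (d : ℝ)) (by positivity), ENNReal.ofReal_natCast,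
          ofReal_measureReal]

/-- The Lipschitz cutoff equal to `1` on `B(x, r - ρ)` and to `0` off `B(x, r)`. -/
noncomputable def cutoff {X : Type*} [PseudoMetricSpace X] (x : X) (r ρ : ℝ) (y : X) : ℝ :=
  projIcc (0 : ℝ) 1 zero_le_one ((r - dist y x) / ρ)

section Cutoff

variable {X : Type*} [PseudoMetricSpace X] {x y : X} {r ρ : ℝ}

theorem continuous_cutoff (x : X) (r ρ : ℝ) : Continuous (cutoff x r ρ) := by
  unfold cutoff
  fun_prop

theorem cutoff_eq_one (hρ : 0 < ρ) (hy : y ∈ ball x (r - ρ)) : cutoff x r ρ y = 1 := by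
  have h : 1 ≤ (r - dist y x) / ρ := (one_le_div hρ).2 (by linarith [mem_ball.1 hy])
  simp [cutoff, projIcc_of_right_le _ h]

theorem cutoff_eq_zero (hρ : 0 ≤ ρ) (hy : y ∉ ball x r) : cutoff x r ρ y = 0 := by
  have h : (r - dist y x) / ρ ≤ 0 :=
    div_nonpos_of_nonpos_of_nonneg (by linarith [not_lt.1 (mt mem_ball.2 hy)]) hρ
  simp [cutoff, projIcc_of_le_left _ h]

theorem abs_cutoff_sub_cutoff_le (hρ : 0 ≤ ρ) (x y z : X) (r : ℝ) :
    |cutoff x r ρ y - cutoff x r ρ z| ≤ min 1 (dist y z / ρ) := by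
  refine le_min (Real.dist_le_of_mem_Icc_01 (Subtype.coe_prop _) (Subtype.coe_prop _)) ?_
  calc |cutoff x r ρ y - cutoff x r ρ z|
      ≤ |(r - dist y x) / ρ - (r - dist z x) / ρ| := abs_projIcc_sub_projIcc zero_le_one
    _ = |dist z x - dist y x| / ρ := by
        rw [← sub_div, sub_sub_sub_cancel_left, abs_div, abs_of_nonneg hρ]
    _ ≤ dist y z / ρ := by
        gcongr
        simpa only [dist_comm z y] using abs_dist_sub_le z y x

end Cutoff

theorem lintegral_lintegral_le_two_mul_measure_mul_lintegral {G : Type*} [AddGroup G]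
    [MeasurableSpace G] [MeasurableAdd₂ G] [MeasurableNeg G] {μ ν : Measure G} [SFinite ν]
    [μ.IsAddLeftInvariant] [μ.IsAddRightInvariant] [μ.IsNegInvariant] (hν : ν ≤ μ) {B : Set G}
    (hB : MeasurableSet B) {f : G → G → ℝ≥0∞} {k : G → ℝ≥0∞} (hk : Measurable k)
    (hfk : ∀ y z, f y z ≤ k (y - z)) (hf : ∀ y ∉ B, ∀ z ∉ B, f y z = 0) :
    ∫⁻ y, ∫⁻ z, f y z ∂ν ∂ν ≤ 2 * ν B * ∫⁻ v, k v ∂μ := by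
  set χ : G → ℝ≥0∞ := B.indicator 1
  have hχ : Measurable χ := measurable_one.indicator hB
  have hνB : ∫⁻ y, χ y ∂ν = ν B := lintegral_indicator_one hB
  have hpair (y z : G) : f y z ≤ χ y * k (y - z) + χ z * k (y - z) := by
    by_cases hy : y ∈ B
    · simpa [χ, hy] using (hfk y z).trans le_self_add
    by_cases hz : z ∈ B
    · simpa [χ, hy, hz] using hfk y z
    · simp [hf y hy z hz]
  have hleft : ∫⁻ y, ∫⁻ z, χ y * k (y - z) ∂ν ∂ν ≤ ν B * ∫⁻ v, k v ∂μ := by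
    rw [← hνB, ← lintegral_mul_const _ hχ]
    refine lintegral_mono fun y => ?_
    rw [lintegral_const_mul _ (by fun_prop), ← lintegral_sub_left_eq_self k y]
    gcongr
  have hright : ∫⁻ y, ∫⁻ z, χ z * k (y - z) ∂ν ∂ν ≤ ν B * ∫⁻ v, k v ∂μ := by
    rw [lintegral_lintegral_swap (by fun_prop), ← hνB, ← lintegral_mul_const _ hχ]
    refine lintegral_mono fun z => ?_
    rw [lintegral_const_mul _ (by fun_prop), ← lintegral_sub_right_eq_self k z]
    gcongr
  calc ∫⁻ y, ∫⁻ z, f y z ∂ν ∂ν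
      ≤ ∫⁻ y, ∫⁻ z, (χ y * k (y - z) + χ z * k (y - z)) ∂ν ∂ν :=
        lintegral_mono fun y => lintegral_mono fun z => hpair y z
    _ = (∫⁻ y, ∫⁻ z, χ y * k (y - z) ∂ν ∂ν) + ∫⁻ y, ∫⁻ z, χ z * k (y - z) ∂ν ∂ν := by
        rw [← lintegral_add_left (by fun_prop)]
        exact lintegral_congr fun y => lintegral_add_left (by fun_prop) _
    _ ≤ 2 * ν B * ∫⁻ v, k v ∂μ := by
        rw [mul_assoc, two_mul]
        exact add_le_add hleft hright

section OrliczSobolev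

variable {n : ℕ} {β : ℝ} {φ : ℝ → ℝ} {Ω : Set (EuclideanSpace ℝ (Fin n))}

theorem fracIntegral_cutoff_le (hφ : IsYoung φ) (x : EuclideanSpace ℝ (Fin n)) (r : ℝ) {ρ t : ℝ}
    (hρ : 0 ≤ ρ) (ht : 0 ≤ t) :
    fracIntegral n β φ Ω (cutoff x r ρ) t⁻¹ ≤
      2 * volume.restrict Ω (ball x r) *
        ∫⁻ v : EuclideanSpace ℝ (Fin n), truncatedKernel φ (n + β) ρ t v := by
  refine lintegral_lintegral_le_two_mul_measure_mul_lintegral Measure.restrict_le_self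
    measurableSet_ball (hφ.measurable_truncatedKernel _ hρ ht) (fun y z => ?_)
    fun y hy z hz => ?_
  · rw [truncatedKernel, ← dist_eq_norm, div_inv_eq_mul, mul_comm |_|]
    have hle : t * |cutoff x r ρ y - cutoff x r ρ z| ≤ t * min 1 (dist y z / ρ) :=
      mul_le_mul_of_nonneg_left (abs_cutoff_sub_cutoff_le hρ x y z r) ht
    have hnonneg : 0 ≤ t * |cutoff x r ρ y - cutoff x r ρ z| := by positivity
    gcongr
    exact hφ.monotoneOn hnonneg (hnonneg.trans hle) hle
  · simp [cutoff_eq_zero hρ hy, cutoff_eq_zero hρ hz, hφ.2.2.1]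

theorem fracNorm_le_ofReal {u : EuclideanSpace ℝ (Fin n) → ℝ} {a : ℝ} (ha : 0 < a)
    (h : fracIntegral n β φ Ω u a ≤ 1) : fracNorm n β φ Ω u ≤ ENNReal.ofReal a :=
  sInf_le ⟨ENNReal.ofReal_pos.2 ha, ENNReal.ofReal_ne_top, by rwa [ENNReal.toReal_ofReal ha.le]⟩

theorem exists_fracNorm_cutoff_le (hβ : β ∈ Ioo 0 (n : ℝ)) (hφ : IsYoung φ)
    (hCβ : CbetaFinite β φ) :
    ∃ Q > 0, ∀ (Ω : Set (EuclideanSpace ℝ (Fin n))) (x : EuclideanSpace ℝ (Fin n)) (r ρ t : ℝ),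
      0 < ρ → 0 < t → 2 * Q * (volume.restrict Ω).real (ball x r) * φ t ≤ ρ ^ β →
      fracNorm n β φ Ω (cutoff x r ρ) ≤ ENNReal.ofReal t⁻¹ := by
  obtain ⟨M, hM, hCM⟩ := hCβ.exists_nonneg
  have hβ₀ : 0 < β := hβ.1
  have hn : 0 < n := by exact_mod_cast hβ₀.trans hβ.2
  have : Nonempty (Fin n) := Fin.pos_iff_nonempty.1 hn
  set V : ℝ := volume.real (ball (0 : EuclideanSpace ℝ (Fin n)) 1)
  have hV : 0 < V :=
    ENNReal.toReal_pos (measure_ball_pos _ _ one_pos).ne' measure_ball_lt_top.ne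
  refine ⟨n * V * (M + 1 / β), by positivity, fun Ω x r ρ t hρ ht hsmall => ?_⟩
  refine fracNorm_le_ofReal (inv_pos.2 ht) ?_
  set m : ℝ := (volume.restrict Ω).real (ball x r)
  calc fracIntegral n β φ Ω (cutoff x r ρ) t⁻¹
      ≤ 2 * volume.restrict Ω (ball x r) *
          ∫⁻ v : EuclideanSpace ℝ (Fin n), truncatedKernel φ (n + β) ρ t v :=
        fracIntegral_cutoff_le hφ x r hρ.le ht.le
    _ ≤ 2 * ENNReal.ofReal m * ENNReal.ofReal (n * V * (M + 1 / β) * (φ t / ρ ^ β)) := by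
        rw [ofReal_measureReal]
        gcongr
        simpa only [finrank_euclideanSpace_fin] using
          lintegral_truncatedKernel_le (E := EuclideanSpace ℝ (Fin n)) volume hφ hCM hM hβ₀ hρ ht
    _ = ENNReal.ofReal (2 * (n * V * (M + 1 / β)) * m * φ t / ρ ^ β) := by
        rw [← ENNReal.ofReal_ofNat, ← ENNReal.ofReal_mul two_pos.le,
          ← ENNReal.ofReal_mul (by positivity)]
        ring_nf
    _ ≤ 1 := ENNReal.ofReal_le_one.2 <| (div_le_one (by positivity)).2 hsmall

/-! ### Testing the imbedding -/

theorem lintegral_le_one_of_luxNorm_lt {ψ : ℝ → ℝ} (hψ : MonotoneOn ψ (Ici 0))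
    {u : EuclideanSpace ℝ (Fin n) → ℝ} {a : ℝ} (h : luxNorm n ψ Ω u < ENNReal.ofReal a) :
    ∫⁻ x in Ω, ENNReal.ofReal (ψ (|u x| / a)) ≤ 1 := by
  obtain ⟨l, ⟨hl₀, hl_top, hl⟩, hla⟩ := sInf_lt_iff.1 h
  have ha : 0 < a := ENNReal.ofReal_pos.1 (hl₀.trans hla)
  have hl₀' : 0 < l.toReal := ENNReal.toReal_pos hl₀.ne' hl_top
  have hla' : l.toReal ≤ a := ENNReal.toReal_le_of_le_ofReal ha.le hla.le
  refine (lintegral_mono fun x => ENNReal.ofReal_le_ofReal ?_).trans hl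
  exact hψ (mem_Ici.2 (by positivity)) (mem_Ici.2 (by positivity)) (by gcongr)

theorem min_measure_mul_le_lintegral_abs_sub {α : Type*} [MeasurableSpace α] {ν : Measure α}
    {A B : Set α} (hA : MeasurableSet A) (hB : MeasurableSet B) {u : α → ℝ}
    (huA : ∀ y ∈ A, u y = 1) (huB : ∀ y ∈ B, u y = 0) {g : ℝ → ℝ≥0∞} (hg : MonotoneOn g (Ici 0))
    (c : ℝ) : min (ν A) (ν B) * g (1 / 2) ≤ ∫⁻ y, g |u y - c| ∂ν := by
  have hfar {S : Set α} (hS : MeasurableSet S) (huS : ∀ y ∈ S, 1 / 2 ≤ |u y - c|) :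
      ν S * g (1 / 2) ≤ ∫⁻ y, g |u y - c| ∂ν := by
    rw [mul_comm, ← setLIntegral_const]
    exact (setLIntegral_mono' hS fun y hy => hg (mem_Ici.2 (by norm_num))
      (mem_Ici.2 (abs_nonneg _)) (huS y hy)).trans (setLIntegral_le_lintegral _ _)
  rcases le_total c (1 / 2) with hc | hc
  · refine (mul_le_mul_left (min_le_left _ _) _).trans (hfar hA fun y hy => ?_)
    rw [huA y hy]
    exact le_abs.2 (.inl (by linarith))
  · refine (mul_le_mul_left (min_le_right _ _) _).trans (hfar hB fun y hy => ?_)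
    rw [huB y hy]
    exact le_abs.2 (.inr (by linarith))

/-- The imbedding of `Ẇ^{β,φ}(Ω)` into `L^{φ^{n/(n-β)}}(Ω)` modulo constants, with constant `C`. -/
def OrliczSobolevImbedding (n : ℕ) (β : ℝ) (φ : ℝ → ℝ) (Ω : Set (EuclideanSpace ℝ (Fin n)))
    (C : ℝ) : Prop :=
  ∀ u : EuclideanSpace ℝ (Fin n) → ℝ, MemW n β φ Ω u →
    (⨅ c : ℝ, luxNorm n (fun t => φ t ^ ((n : ℝ) / ((n : ℝ) - β))) Ω (fun x => u x - c))
      ≤ ENNReal.ofReal C * fracNorm n β φ Ω u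

theorem OrliczSobolevImbedding.min_measure_mul_le_one {C : ℝ}
    (hI : OrliczSobolevImbedding n β φ Ω C) (hC : 0 < C) (hβn : β ≤ n) (hφ : IsYoung φ)
    {u : EuclideanSpace ℝ (Fin n) → ℝ} (hu : LocallyIntegrableOn u Ω) {t : ℝ} (ht : 0 < t)
    (hut : fracNorm n β φ Ω u ≤ ENNReal.ofReal t⁻¹) {A B : Set (EuclideanSpace ℝ (Fin n))}
    (hA : MeasurableSet A) (hB : MeasurableSet B) (huA : ∀ y ∈ A, u y = 1)
    (huB : ∀ y ∈ B, u y = 0) :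
    min (volume.restrict Ω A) (volume.restrict Ω B) *
      ENNReal.ofReal (φ (t / (4 * C)) ^ ((n : ℝ) / (n - β))) ≤ 1 := by
  set p : ℝ := (n : ℝ) / (n - β)
  have hp : 0 ≤ p := div_nonneg n.cast_nonneg (sub_nonneg.2 hβn)
  set a : ℝ := 2 * C / t
  have ha : 0 < a := by positivity
  have hinf : ⨅ c : ℝ, luxNorm n (fun s => φ s ^ p) Ω (fun x => u x - c) <
      ENNReal.ofReal a := by
    calc ⨅ c : ℝ, luxNorm n (fun s => φ s ^ p) Ω (fun x => u x - c)
        ≤ ENNReal.ofReal C * ENNReal.ofReal t⁻¹ :=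
          (hI u ⟨hu, (hut.trans_lt ENNReal.ofReal_lt_top).ne⟩).trans (by gcongr)
      _ < ENNReal.ofReal a := by
          rw [← ENNReal.ofReal_mul hC.le, ENNReal.ofReal_lt_ofReal_iff ha, ← div_eq_mul_inv]
          exact div_lt_div_of_pos_right (by linarith) ht
  obtain ⟨c, hc⟩ := iInf_lt_iff.1 hinf
  have hg : MonotoneOn (fun s => ENNReal.ofReal (φ (s / a) ^ p)) (Ici 0) := fun s hs s' hs' hss' =>
    ENNReal.ofReal_le_ofReal <| hφ.monotoneOn_rpow hp (div_nonneg hs ha.le)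
      (div_nonneg hs' ha.le) (by gcongr)
  calc min (volume.restrict Ω A) (volume.restrict Ω B) * ENNReal.ofReal (φ (t / (4 * C)) ^ p)
      = min (volume.restrict Ω A) (volume.restrict Ω B) *
          ENNReal.ofReal (φ (1 / 2 / a) ^ p) := by
        rw [show 1 / 2 / a = t / (4 * C) by simp only [a]; field_simp; norm_num]
    _ ≤ ∫⁻ x in Ω, ENNReal.ofReal (φ (|u x - c| / a) ^ p) :=
        min_measure_mul_le_lintegral_abs_sub hA hB huA huB hg c
    _ ≤ 1 := lintegral_le_one_of_luxNorm_lt (hφ.monotoneOn_rpow hp) hc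

theorem OrliczSobolevImbedding.exists_min_measure_ball_mul_le_one {C : ℝ}
    (hI : OrliczSobolevImbedding n β φ Ω C) (hC : 0 < C) (hβ : β ∈ Ioo 0 (n : ℝ))
    (hφ : IsYoung φ) (hCβ : CbetaFinite β φ) :
    ∃ Q > 0, ∀ (x : EuclideanSpace ℝ (Fin n)) (s r t : ℝ), s < r → 0 < t →
      2 * Q * (volume.restrict Ω).real (ball x r) * φ t ≤ (r - s) ^ β →
      min (volume.restrict Ω (ball x s)) (volume.restrict Ω (ball x r)ᶜ) *
        ENNReal.ofReal (φ (t / (4 * C)) ^ ((n : ℝ) / (n - β))) ≤ 1 := by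
  obtain ⟨Q, hQ, henergy⟩ := exists_fracNorm_cutoff_le hβ hφ hCβ
  refine ⟨Q, hQ, fun x s r t hsr ht hsmall => ?_⟩
  have hρ : 0 < r - s := sub_pos.2 hsr
  refine hI.min_measure_mul_le_one hC hβ.2.le hφ
    ((continuous_cutoff x r (r - s)).locallyIntegrable.locallyIntegrableOn Ω) ht
    (henergy Ω x r (r - s) t hρ ht hsmall) measurableSet_ball measurableSet_ball.compl
    (fun y hy => cutoff_eq_one hρ ?_) fun y hy => cutoff_eq_zero hρ.le hy
  rwa [sub_sub_cancel]

theorem le_rpow_mul_rpow_of_div_rpow_mul_le {β d κ m ρ : ℝ} (hβ : 0 < β) (hβd : β < d)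
    (hκ : 0 < κ) (hm : 0 < m) (hρ : 0 < ρ) (h : (ρ ^ β / (κ * m)) ^ (d / (d - β)) * m ≤ 2) :
    ρ ≤ (2 * κ) ^ (1 / β) * m ^ (1 / d) := by
  have hd : 0 < d := hβ.trans hβd
  have hsub : 0 < d - β := sub_pos.2 hβd
  have hexp : (d / (d - β))⁻¹ = 1 - β / d := by
    field_simp
  have hratio : ρ ^ β / (κ * m) ≤ 2 * m ^ (β / d) / m := by
    calc ρ ^ β / (κ * m) ≤ (2 / m) ^ (d / (d - β))⁻¹ :=
          (Real.le_rpow_inv_iff_of_pos (by positivity) (by positivity) (by positivity)).2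
            ((le_div_iff₀ hm).2 h)
      _ = 2 ^ (1 - β / d) * (m ^ (β / d) / m) := by
          rw [hexp, Real.div_rpow two_pos.le hm.le, Real.rpow_sub hm, Real.rpow_one]
          field_simp
      _ ≤ 2 ^ (1 : ℝ) * (m ^ (β / d) / m) := by
          gcongr
          · exact one_le_two
          · linarith [div_pos hβ hd]
      _ = 2 * m ^ (β / d) / m := by rw [Real.rpow_one, mul_div_assoc]
  have hpow : ρ ^ β ≤ 2 * κ * m ^ (β / d) := by
    calc ρ ^ β ≤ 2 * m ^ (β / d) / m * (κ * m) := (div_le_iff₀ (by positivity)).1 hratio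
      _ = 2 * κ * m ^ (β / d) := by field_simp
  calc ρ ≤ (2 * κ * m ^ (β / d)) ^ (1 / β) := by
        rw [one_div]
        exact (Real.le_rpow_inv_iff_of_pos hρ.le (by positivity) hβ).2 hpow
    _ = (2 * κ) ^ (1 / β) * m ^ (1 / d) := by
        rw [Real.mul_rpow (by positivity) (by positivity), ← Real.rpow_mul hm.le]
        congr 2
        field_simp

theorem OrliczSobolevImbedding.exists_radius_sub_le {C : ℝ}
    (hI : OrliczSobolevImbedding n β φ Ω C) (hC : 0 < C) (hβ : β ∈ Ioo 0 (n : ℝ))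
    (hφ : IsYoung φ) {K : ℝ} (hK : IsDoubling φ K) (hCβ : CbetaFinite β φ) :
    ∃ A > 0, ∀ (x : EuclideanSpace ℝ (Fin n)) (s r : ℝ), s < r →
      volume.restrict Ω (ball x r) ≠ 0 →
      volume.restrict Ω (ball x r) ≤ 2 * volume.restrict Ω (ball x s) →
      volume.restrict Ω (ball x r) ≤ 2 * volume.restrict Ω (ball x r)ᶜ →
      r - s ≤ A * (volume.restrict Ω).real (ball x r) ^ (1 / (n : ℝ)) := by
  obtain ⟨Q, hQ, htest⟩ := hI.exists_min_measure_ball_mul_le_one hC hβ hφ hCβ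
  obtain ⟨L, hL, hφL⟩ := hK.exists_map_le_mul_map_div hφ.monotoneOn (C := 4 * C) (by positivity)
  refine ⟨(2 * (2 * Q * L)) ^ (1 / β), by positivity, fun x s r hsr hne hin hout => ?_⟩
  set ν : Measure (EuclideanSpace ℝ (Fin n)) := volume.restrict Ω
  set m : ℝ := ν.real (ball x r)
  set p : ℝ := (n : ℝ) / (n - β)
  have hp : 0 ≤ p := div_nonneg n.cast_nonneg (sub_nonneg.2 hβ.2.le)
  have hm : 0 < m := ENNReal.toReal_pos hne measure_ball_lt_top.ne
  have hρ : 0 < r - s := sub_pos.2 hsr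
  -- `1 / t` is the Luxemburg parameter at which the energy bound of the cutoff equals `1`.
  obtain ⟨t, ht, hφt⟩ := hφ.exists_pos_eq (y := (r - s) ^ β / (2 * Q * m)) (by positivity)
  have hmass : ENNReal.ofReal m ≤ 2 * min (ν (ball x s)) (ν (ball x r)ᶜ) := by
    rw [ofReal_measureReal]
    rcases min_choice (ν (ball x s)) (ν (ball x r)ᶜ) with h | h <;> rw [h] <;> assumption
  have hbase : (r - s) ^ β / (2 * Q * L * m) ≤ φ (t / (4 * C)) := by
    calc (r - s) ^ β / (2 * Q * L * m) = φ t / L := by rw [hφt]; field_simp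
      _ ≤ φ (t / (4 * C)) := (div_le_iff₀' hL).2 (hφL t ht)
  refine le_rpow_mul_rpow_of_div_rpow_mul_le hβ.1 hβ.2 (by positivity) hm hρ ?_
  rw [← ENNReal.ofReal_le_ofReal_iff two_pos.le, ENNReal.ofReal_mul (by positivity), mul_comm]
  calc ENNReal.ofReal m * ENNReal.ofReal (((r - s) ^ β / (2 * Q * L * m)) ^ p)
      ≤ 2 * min (ν (ball x s)) (ν (ball x r)ᶜ) *
          ENNReal.ofReal (φ (t / (4 * C)) ^ p) := by gcongr
    _ ≤ ENNReal.ofReal 2 := by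
        rw [mul_assoc, ENNReal.ofReal_ofNat]
        refine mul_le_of_le_one_right' (htest x s r t hsr ht ?_)
        rw [hφt, mul_div_cancel₀ _ (by positivity)]

end OrliczSobolev

/-! ### From radius gaps to volume growth -/

theorem exists_le_pow_mul_of_map_sub_le {F : ℝ → ℝ} {B D q r δ : ℝ} (hB : 0 ≤ B) (hD : 0 ≤ D)
    (hBD : B + D * q ≤ D) (hq : 0 ≤ q) (hF : ∀ s, 0 ≤ F s) (hδ : 0 < δ) (hr : δ ≤ r - D * F r)
    (hstep : ∀ s > 0, s ≤ r → F (s - B * F s) ≤ q * F s) (j : ℕ) :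
    ∃ s ≤ r, δ ≤ s - D * F s ∧ F s ≤ q ^ j * F r := by
  induction j with
  | zero => exact ⟨r, le_rfl, hr, by simp⟩
  | succ j ih =>
    obtain ⟨s, hsr, hδs, hFs⟩ := ih
    have hs : 0 < s := hδ.trans_le (hδs.trans (sub_le_self _ (mul_nonneg hD (hF s))))
    have hFs' : F (s - B * F s) ≤ q * F s := hstep s hs hsr
    refine ⟨s - B * F s, (sub_le_self _ (mul_nonneg hB (hF s))).trans hsr, ?_, ?_⟩
    · calc δ ≤ s - D * F s := hδs
        _ ≤ s - (B + D * q) * F s := by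
          gcongr
          exact hF s
        _ = s - B * F s - D * (q * F s) := by ring
        _ ≤ s - B * F s - D * F (s - B * F s) := by gcongr
    · calc F (s - B * F s) ≤ q * F s := hFs'
        _ ≤ q * (q ^ j * F r) := by gcongr
        _ = q ^ (j + 1) * F r := by ring

theorem le_div_mul_of_map_sub_le {F : ℝ → ℝ} {B q r : ℝ} (hB : 0 ≤ B) (hq₀ : 0 ≤ q) (hq₁ : q < 1)
    (hF : Monotone F) (hF₀ : ∀ s, 0 ≤ F s) (hpos : ∀ s > 0, 0 < F s)
    (hstep : ∀ s > 0, s ≤ r → F (s - B * F s) ≤ q * F s) : r ≤ B / (1 - q) * F r := by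
  by_contra! hlt
  have hq : 0 < 1 - q := sub_pos.2 hq₁
  set D : ℝ := B / (1 - q) with hD_def
  have hD : 0 ≤ D := div_nonneg hB hq.le
  have hBD : B + D * q = D := by linarith [(eq_div_iff hq.ne').1 hD_def]
  set δ : ℝ := r - D * F r with hδ_def
  have hδ : 0 < δ := sub_pos.2 hlt
  have hlim : Tendsto (fun j : ℕ => q ^ j * F r) atTop (𝓝 0) := by
    simpa using (tendsto_pow_atTop_nhds_zero_of_lt_one hq₀ hq₁).mul_const (F r)
  refine (hpos δ hδ).not_ge (ge_of_tendsto' hlim fun j => ?_)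
  obtain ⟨s, -, hδs, hFs⟩ :=
    exists_le_pow_mul_of_map_sub_le hB hD hBD.le hq₀ hF₀ hδ hδ_def.le hstep j
  exact (hF (hδs.trans (sub_le_self _ (mul_nonneg hD (hF₀ s))))).trans hFs

section MetricMeasure

variable {X : Type*} [PseudoMetricSpace X] [MeasurableSpace X] {ν : Measure X}
  {A D α : ℝ}

theorem radius_le_of_measure_ball_le_two_mul_compl [ProperSpace X]
    [IsFiniteMeasureOnCompacts ν] (hα : 0 < α) (hA : 0 < A) {x : X} (hx : x ∈ ν.support)
    (hgap : ∀ s r : ℝ, s < r → ν (ball x r) ≠ 0 → ν (ball x r) ≤ 2 * ν (ball x s) →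
      ν (ball x r) ≤ 2 * ν (ball x r)ᶜ → r - s ≤ A * ν.real (ball x r) ^ α)
    {r : ℝ} (hout : ν (ball x r) ≤ 2 * ν (ball x r)ᶜ) :
    r ≤ 2 * A / (1 - (1 / 2) ^ α) * ν.real (ball x r) ^ α := by
  have hne {s : ℝ} (hs : 0 < s) : ν (ball x s) ≠ 0 :=
    ((Measure.mem_support_iff_forall x).1 hx _ (ball_mem_nhds x hs)).ne'
  have hpos (s : ℝ) (hs : 0 < s) : 0 < ν.real (ball x s) ^ α :=
    Real.rpow_pos_of_pos (ENNReal.toReal_pos (hne hs) measure_ball_lt_top.ne) α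
  have hmono : Monotone fun s => ν.real (ball x s) ^ α := fun s s' hss' => by
    have := measureReal_mono (μ := ν) (ball_subset_ball (x := x) hss') measure_ball_lt_top.ne
    dsimp only
    gcongr
  refine le_div_mul_of_map_sub_le (by positivity) (by positivity)
    (Real.rpow_lt_one (by norm_num) (by norm_num) hα) hmono (fun s => by positivity) hpos
    fun s hs hsr => ?_
  have hA_pos := mul_pos hA (hpos s hs)
  set s' : ℝ := s - 2 * A * ν.real (ball x s) ^ α
  have hout_s : ν (ball x s) ≤ 2 * ν (ball x s)ᶜ := by
    calc ν (ball x s) ≤ ν (ball x r) := measure_mono (ball_subset_ball hsr)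
      _ ≤ 2 * ν (ball x r)ᶜ := hout
      _ ≤ 2 * ν (ball x s)ᶜ := by gcongr
  have hhalf : 2 * ν (ball x s') ≤ ν (ball x s) := by
    by_contra! hlt
    linarith [hgap s' s (by linarith) (hne hs) hlt.le hout_s]
  rw [← Real.mul_rpow (by norm_num) measureReal_nonneg]
  have hhalf' : 2 * ν.real (ball x s') ≤ ν.real (ball x s) := by
    simpa [Measure.real] using ENNReal.toReal_mono measure_ball_lt_top.ne hhalf
  gcongr
  linarith

theorem dist_le_of_radius_le [IsFiniteMeasure ν] (hα : 0 ≤ α) (hD : 0 ≤ D) {y z : X}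
    (hy : ∀ r > 0, ν (ball y r) ≤ 2 * ν (ball y r)ᶜ → r ≤ D * ν.real (ball y r) ^ α)
    (hz : ∀ r > 0, ν (ball z r) ≤ 2 * ν (ball z r)ᶜ → r ≤ D * ν.real (ball z r) ^ α) :
    dist y z ≤ 2 * D * ν.real univ ^ α := by
  rcases (dist_nonneg (x := y) (y := z)).eq_or_lt with h₀ | h₀
  · rw [← h₀]
    positivity
  set s : ℝ := dist y z / 2
  have hs : 0 < s := half_pos h₀
  have hdisj : Disjoint (ball y s) (ball z s) := ball_disjoint_ball (add_halves _).le
  suffices hhalf : s ≤ D * ν.real univ ^ α by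
    linarith [show dist y z = 2 * s from (mul_div_cancel₀ _ two_ne_zero).symm]
  have hle_univ (x : X) : D * ν.real (ball x s) ^ α ≤ D * ν.real univ ^ α := by
    gcongr
    exacts [measure_ne_top _ _, subset_univ _]
  -- Of the two disjoint balls, the one of smaller measure has no more mass than its complement.
  rcases le_total (ν (ball y s)) (ν (ball z s)) with h | h
  · refine (hy s hs ?_).trans (hle_univ _)
    exact (h.trans (measure_mono hdisj.subset_compl_left)).trans (le_mul_of_one_le_left' one_le_two)
  · refine (hz s hs ?_).trans (hle_univ _)
    exact (h.trans (measure_mono hdisj.subset_compl_right)).trans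
      (le_mul_of_one_le_left' one_le_two)

theorem radius_le_of_lt_two_mul_ediam [OpensMeasurableSpace X] [ProperSpace X]
    [IsFiniteMeasureOnCompacts ν] (hα : 0 ≤ α) (hD : 0 ≤ D) {S : Set X}
    (hS : ∀ y ∈ S, ∀ r > 0, ν (ball y r) ≤ 2 * ν (ball y r)ᶜ → r ≤ D * ν.real (ball y r) ^ α)
    {x : X} (hx : x ∈ S) {r : ℝ} (hr : 0 < r) (hr_lt : ENNReal.ofReal r < 2 * ediam S) :
    r ≤ 4 * D * (2 * ν.real (ball x r)) ^ α := by
  have hball : ν (ball x r) ≠ ∞ := measure_ball_lt_top.ne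
  rcases le_or_gt (ν (ball x r)) (2 * ν (ball x r)ᶜ) with hout | hin
  · calc r ≤ 1 * D * (1 * ν.real (ball x r)) ^ α := by simpa using hS x hx r hr hout
      _ ≤ 4 * D * (2 * ν.real (ball x r)) ^ α := by gcongr <;> norm_num
  have huniv : ν univ ≤ 2 * ν (ball x r) := by
    rw [← measure_add_measure_compl (measurableSet_ball (x := x) (ε := r)), two_mul]
    exact add_le_add_right ((le_mul_of_one_le_left' one_le_two).trans hin.le) _
  have htop : 2 * ν (ball x r) ≠ ∞ := ENNReal.mul_ne_top ENNReal.ofNat_ne_top hball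
  have : IsFiniteMeasure ν := ⟨huniv.trans_lt htop.lt_top⟩
  have hdiam : ediam S ≤ ENNReal.ofReal (2 * D * ν.real univ ^ α) :=
    ediam_le fun y hy z hz => by
      rw [edist_dist]
      exact ENNReal.ofReal_le_ofReal (dist_le_of_radius_le hα hD (hS y hy) (hS z hz))
  have huniv_real : ν.real univ ≤ 2 * ν.real (ball x r) := by
    simpa [Measure.real] using ENNReal.toReal_mono htop huniv
  have hr_le : ENNReal.ofReal r ≤ ENNReal.ofReal (2 * (2 * D * ν.real univ ^ α)) := by
    rw [ENNReal.ofReal_mul two_pos.le, ENNReal.ofReal_ofNat]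
    exact hr_lt.le.trans (by gcongr)
  calc r ≤ 2 * (2 * D * ν.real univ ^ α) :=
        (ENNReal.ofReal_le_ofReal_iff (by positivity)).1 hr_le
    _ = 4 * D * ν.real univ ^ α := by ring
    _ ≤ 4 * D * (2 * ν.real (ball x r)) ^ α := by gcongr

end MetricMeasure

theorem ahlforsRegular_of_radius_le {n : ℕ} (hn : n ≠ 0) {Ω : Set (EuclideanSpace ℝ (Fin n))}
    {E : ℝ} (hE : 0 < E)
    (h : ∀ x ∈ Ω, ∀ r > 0, ENNReal.ofReal r < 2 * ediam Ω →
      r ≤ E * (2 * (volume.restrict Ω).real (ball x r)) ^ (1 / (n : ℝ))) :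
    AhlforsRegular n Ω := by
  refine ⟨1 / (2 * E ^ n), by positivity, fun x hx r hr hdiam => ?_⟩
  rw [← Measure.restrict_apply measurableSet_ball, ← ofReal_measureReal]
  set m : ℝ := (volume.restrict Ω).real (ball x r)
  have hpow : r ^ n ≤ m * (2 * E ^ n) := by
    calc r ^ n ≤ (E * (2 * m) ^ (1 / (n : ℝ))) ^ n := by
          gcongr
          exact h x hx r hr hdiam
      _ = m * (2 * E ^ n) := by
          rw [mul_pow, one_div, Real.rpow_inv_natCast_pow (by positivity) hn]
          ring
  rw [one_div_mul_eq_div]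
  exact ENNReal.ofReal_le_ofReal ((div_le_iff₀ (by positivity)).2 hpow)

theorem imbedding_low_implies_ahlfors_general {n : ℕ} {β : ℝ} (hβ : β ∈ Ioo 0 (n : ℝ))
    {φ : ℝ → ℝ} (hφ : IsYoung φ) (hdbl : ∃ K : ℝ, IsDoubling φ K) (hCβ : CbetaFinite β φ)
    {Ω : Set (EuclideanSpace ℝ (Fin n))} (hΩ : Ω ⊆ (volume.restrict Ω).support)
    (hI : ∃ C > 0, OrliczSobolevImbedding n β φ Ω C) : AhlforsRegular n Ω := by
  obtain ⟨K, hK⟩ := hdbl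
  obtain ⟨C, hC, hI⟩ := hI
  have hn : 0 < (n : ℝ) := hβ.1.trans hβ.2
  obtain ⟨A, hA, hgap⟩ := hI.exists_radius_sub_le hC hβ hφ hK hCβ
  set D : ℝ := 2 * A / (1 - (1 / 2) ^ (1 / (n : ℝ)))
  have hD : 0 < D := div_pos (by positivity) <| sub_pos.2 <|
    Real.rpow_lt_one (by norm_num) (by norm_num) (by positivity)
  refine ahlforsRegular_of_radius_le (Nat.cast_pos.1 hn).ne' (E := 4 * D) (by positivity)
    fun x hx r hr hdiam => radius_le_of_lt_two_mul_ediam (by positivity) hD.le ?_ hx hr hdiam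
  exact fun y hy r _ hout =>
    radius_le_of_measure_ball_le_two_mul_compl (by positivity) hA (hΩ hy) (hgap y) hout

/-- the imbedding (case `0 < β < n`) implies Ahlfors `n`-regularity. -/
theorem imbedding_low_implies_ahlfors
    (n : ℕ) (hn : 1 ≤ n) (β : ℝ) (hβ : β ∈ Set.Ioo (0 : ℝ) (n : ℝ))
    (φ : ℝ → ℝ) (hφ : IsYoung φ) (hdbl : ∃ K : ℝ, IsDoubling φ K)
    (hCβ : CbetaFinite β φ)
    (Ω : Set (EuclideanSpace ℝ (Fin n))) (hΩopen : IsOpen Ω) (hΩconn : IsConnected Ω)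
    (hI : ∃ C > (0 : ℝ), ∀ u : EuclideanSpace ℝ (Fin n) → ℝ, MemW n β φ Ω u →
      (⨅ c : ℝ, luxNorm n (fun t => φ t ^ ((n : ℝ) / ((n : ℝ) - β))) Ω (fun x => u x - c))
        ≤ ENNReal.ofReal C * fracNorm n β φ Ω u) :
    AhlforsRegular n Ω :=
  imbedding_low_implies_ahlfors_general hβ hφ hdbl hCβ
    (by simpa [hΩopen.interior_eq, Measure.support_eq_univ] using
      Measure.interior_inter_support (μ := volume) (s := Ω)) hI
end

section
/- Let n ≥ 1, β ∈ (0,n), and let φ be a doubling Young function satisfying C_β := sup_{t>0} (t^β/φ(t)) ∫_0^t φ(s) s^{-β-1} ds < ∞. Then there exists a constant C = C(β,n,φ) > 0 such that for every u ∈ Ẇ^{β,φ}(ℝⁿ), inf_{c∈ℝ} ‖u − c‖_{L^{φ^{n/(n−β)}}(ℝⁿ)} ≤ C ‖u‖_{Ẇ^{β,φ}(ℝⁿ)}. -/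
/-!
The inequality follows from a pointwise estimate of Hedberg type. Let `v` be `u` divided by an
admissible `λ`, so that its energy density `g(x) = ∫ φ(|v(x) - v(y)|) |x - y|^{-n-β} dy` satisfies
`∫ g ≤ 1`. Jensen's inequality gives `φ(|v(x) - v_{B(x,r)}|) ≲ r^β g(x)`, and
`φ(|v_B - v_{B'}|) ≲ r^{β-n}` for the averages over nearby balls of radius comparable to `r`.

Since `β < n`, the second bound decays geometrically along the balls `B(z, 2ᵏ r)`. A doubling convex
`φ` satisfies `φ(τ s) ≥ θ φ(s)` for any given `θ < 1` and a suitable `τ < 1`, so the increments of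
the averages themselves decay geometrically and sum to a quantity of `φ`-size `≲ r^{β-n}`. Hence all
averages converge to one constant `c`, and `φ(|v(x) - c|) ≲ r^β g(x) + r^{β-n}` for every `r > 0`.
Choosing `r = g(x)^{-1/n}` yields `φ(|v(x) - c|)^{n/(n-β)} ≲ g(x)`, which is then integrated.
-/

open MeasureTheory Metric Set Filter
open scoped ENNReal NNReal Topology Classical

/-! ### Young functions -/

namespace IsYoung

variable {φ : ℝ → ℝ} {K θ : ℝ}

theorem nonneg_s7 (hφ : IsYoung φ) {t : ℝ} (ht : 0 ≤ t) : 0 ≤ φ t := by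
  rcases ht.eq_or_lt with rfl | ht
  · exact hφ.2.2.1.ge
  · exact (hφ.2.2.2 t ht).le

theorem map_mul_le_s7 (hφ : IsYoung φ) {a t : ℝ} (ha₀ : 0 ≤ a) (ha₁ : a ≤ 1) (ht : 0 ≤ t) :
    φ (a * t) ≤ a * φ t := by
  have h := hφ.2.1.2 (mem_Ici.2 ht) (mem_Ici.2 le_rfl) ha₀ (sub_nonneg.2 ha₁) (by ring)
  simpa [hφ.2.2.1] using h

theorem strictMonoOn (hφ : IsYoung φ) : StrictMonoOn φ (Ici 0) := by
  intro s hs t _ hst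
  have ht : 0 < t := lt_of_le_of_lt hs hst
  calc φ s = φ (s / t * t) := by rw [div_mul_cancel₀ s ht.ne']
    _ ≤ s / t * φ t := hφ.map_mul_le_s7 (div_nonneg hs ht.le) ((div_le_one ht).2 hst.le) ht.le
    _ < φ t := mul_lt_of_lt_one_left (hφ.2.2.2 t ht) ((div_lt_one ht).2 hst)

theorem mono (hφ : IsYoung φ) {s t : ℝ} (hs : 0 ≤ s) (hst : s ≤ t) : φ s ≤ φ t :=
  hφ.strictMonoOn.monotoneOn hs (hs.trans hst) hst

theorem tendsto_atTop (hφ : IsYoung φ) : Tendsto φ atTop atTop := by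
  have hφ₁ : 0 < φ 1 := hφ.2.2.2 1 one_pos
  refine tendsto_atTop_mono' atTop ?_ (tendsto_id.atTop_mul_const hφ₁)
  filter_upwards [eventually_ge_atTop 1] with t ht
  have ht₀ : 0 < t := one_pos.trans_le ht
  have h := hφ.map_mul_le_s7 (inv_nonneg.2 ht₀.le) (inv_le_one_of_one_le₀ ht) ht₀.le
  rwa [inv_mul_cancel₀ ht₀.ne', ← div_eq_inv_mul, le_div_iff₀' ht₀] at h

theorem surjOn_Ici (hφ : IsYoung φ) : SurjOn φ (Ici 0) (Ici 0) := by
  have h := isPreconnected_Ici.intermediate_value_Ici (mem_Ici.2 le_rfl)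
    (le_principal_iff.2 (Ici_mem_atTop 0)) hφ.1 hφ.tendsto_atTop
  rwa [hφ.2.2.1] at h

theorem map_two_mul_le (hφ : IsYoung φ) (hK : IsDoubling φ K) {t : ℝ} (ht : 0 ≤ t) :
    φ (2 * t) ≤ K * φ t := by
  rcases ht.eq_or_lt with rfl | ht
  · simp [hφ.2.2.1]
  · exact hK.2 t ht

theorem map_two_pow_mul_le (hφ : IsYoung φ) (hK : IsDoubling φ K) (m : ℕ) {t : ℝ} (ht : 0 ≤ t) :
    φ (2 ^ m * t) ≤ K ^ m * φ t := by
  have hK₀ : 0 < K := one_pos.trans hK.1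
  induction m with
  | zero => simp
  | succ m ih =>
    calc φ (2 ^ (m + 1) * t) = φ (2 * (2 ^ m * t)) := by ring_nf
      _ ≤ K * φ (2 ^ m * t) := hφ.map_two_mul_le hK (by positivity)
      _ ≤ K * (K ^ m * φ t) := by gcongr
      _ = K ^ (m + 1) * φ t := by ring

theorem map_add_le (hφ : IsYoung φ) (hK : IsDoubling φ K) {a b : ℝ} (ha : 0 ≤ a) (hb : 0 ≤ b) :
    φ (a + b) ≤ K / 2 * (φ a + φ b) := by
  have hK₀ : 0 < K := one_pos.trans hK.1
  have hmid : φ (2⁻¹ * a + 2⁻¹ * b) ≤ 2⁻¹ * φ a + 2⁻¹ * φ b :=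
    hφ.2.1.2 (mem_Ici.2 ha) (mem_Ici.2 hb) (by norm_num) (by norm_num) (by norm_num)
  calc φ (a + b) = φ (2 * (2⁻¹ * a + 2⁻¹ * b)) := by ring_nf
    _ ≤ K * φ (2⁻¹ * a + 2⁻¹ * b) := hφ.map_two_mul_le hK (by positivity)
    _ ≤ K * (2⁻¹ * φ a + 2⁻¹ * φ b) := by gcongr
    _ = K / 2 * (φ a + φ b) := by ring

theorem exists_mul_le_map_mul (hφ : IsYoung φ) (hK : IsDoubling φ K) (hθ₀ : 0 < θ) (hθ₁ : θ < 1) :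
    ∃ τ, 0 < τ ∧ τ < 1 ∧ ∀ s, 0 ≤ s → θ * φ s ≤ φ (τ * s) := by
  have hK₁ : 0 < K - 1 := sub_pos.2 hK.1
  have hθ : 0 < θ⁻¹ - 1 := sub_pos.2 ((one_lt_inv₀ hθ₀).2 hθ₁)
  obtain ⟨α, hα₀, hα₁, hαK⟩ : ∃ α, 0 < α ∧ α ≤ 1 ∧ α * (K - 1) ≤ θ⁻¹ - 1 :=
    ⟨min 1 ((θ⁻¹ - 1) / (K - 1)), lt_min one_pos (div_pos hθ hK₁), min_le_left _ _,
      (le_div_iff₀ hK₁).1 (min_le_right _ _)⟩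
  refine ⟨(1 + α)⁻¹, by positivity, inv_lt_one_of_one_lt₀ (by linarith), fun s hs => ?_⟩
  set t := (1 + α)⁻¹ * s with ht
  have ht₀ : 0 ≤ t := by positivity
  have hφt : 0 ≤ φ t := hφ.nonneg_s7 ht₀
  have hst : s = (1 - α) * t + α * (2 * t) := by rw [ht]; field_simp; ring
  have hφs : φ s ≤ θ⁻¹ * φ t := calc
    φ s = φ ((1 - α) * t + α * (2 * t)) := by rw [← hst]
    _ ≤ (1 - α) * φ t + α * φ (2 * t) :=
      hφ.2.1.2 (mem_Ici.2 ht₀) (mem_Ici.2 (by positivity)) (sub_nonneg.2 hα₁) hα₀.le (by ring)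
    _ ≤ (1 - α) * φ t + α * (K * φ t) := by gcongr; exact hφ.map_two_mul_le hK ht₀
    _ = (1 + α * (K - 1)) * φ t := by ring
    _ ≤ θ⁻¹ * φ t := by gcongr; linarith
  rwa [← div_eq_inv_mul, le_div_iff₀' hθ₀] at hφs

theorem exists_map_tsum_le (hφ : IsYoung φ) (hK : IsDoubling φ K) (hθ₀ : 0 < θ) (hθ₁ : θ < 1) :
    ∃ C > 0, ∀ (y : ℝ) (d : ℕ → ℝ), 0 ≤ y → (∀ k, 0 ≤ d k) → (∀ k, φ (d k) ≤ θ ^ k * y) →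
      Summable d ∧ φ (∑' k, d k) ≤ C * y := by
  obtain ⟨τ, hτ₀, hτ₁, hτ⟩ := hφ.exists_mul_le_map_mul hK hθ₀ hθ₁
  obtain ⟨m, hm⟩ := pow_unbounded_of_one_lt (1 - τ)⁻¹ (one_lt_two (α := ℝ))
  have hK₀ : 0 < K := one_pos.trans hK.1
  refine ⟨K ^ m, by positivity, fun y d hy hd hdy => ?_⟩
  obtain ⟨T, hT₀ : 0 ≤ T, rfl⟩ := hφ.surjOn_Ici hy
  have hθτ (k : ℕ) : θ ^ k * φ T ≤ φ (τ ^ k * T) := by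
    induction k with
    | zero => simp
    | succ k ih =>
      calc θ ^ (k + 1) * φ T = θ * (θ ^ k * φ T) := by ring
        _ ≤ θ * φ (τ ^ k * T) := by gcongr
        _ ≤ φ (τ * (τ ^ k * T)) := hτ _ (by positivity)
        _ = φ (τ ^ (k + 1) * T) := by ring_nf
  have hdT (k : ℕ) : d k ≤ τ ^ k * T :=
    (hφ.strictMonoOn.le_iff_le (hd k) (mem_Ici.2 (by positivity))).1 ((hdy k).trans (hθτ k))
  have hgeom : HasSum (fun k : ℕ => τ ^ k * T) ((1 - τ)⁻¹ * T) :=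
    (hasSum_geometric_of_lt_one hτ₀.le hτ₁).mul_right T
  have hsum : Summable d := .of_nonneg_of_le hd hdT hgeom.summable
  refine ⟨hsum, ?_⟩
  calc φ (∑' k, d k) ≤ φ (2 ^ m * T) := hφ.mono (tsum_nonneg hd) <|
        (hasSum_le hdT hsum.hasSum hgeom).trans (by gcongr)
    _ ≤ K ^ m * φ T := hφ.map_two_pow_mul_le hK m hT₀

theorem exists_tendsto_of_map_dist_le (hφ : IsYoung φ) (hK : IsDoubling φ K) (hθ₀ : 0 < θ)
    (hθ₁ : θ < 1) {Y : Type*} [PseudoMetricSpace Y] [CompleteSpace Y] :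
    ∃ C > 0, ∀ (y : ℝ) (a : ℕ → Y), 0 ≤ y → (∀ k, φ (dist (a k) (a (k + 1))) ≤ θ ^ k * y) →
      ∃ l, Tendsto a atTop (𝓝 l) ∧ φ (dist (a 0) l) ≤ C * y := by
  obtain ⟨C, hC₀, hC⟩ := hφ.exists_map_tsum_le hK hθ₀ hθ₁
  refine ⟨C, hC₀, fun y a hy ha => ?_⟩
  obtain ⟨hsum, hle⟩ := hC y _ hy (fun _ => dist_nonneg) ha
  obtain ⟨l, hl⟩ := cauchySeq_tendsto_of_complete (cauchySeq_of_summable_dist hsum)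
  exact ⟨l, hl, (hφ.mono dist_nonneg (dist_le_tsum_dist_of_tendsto₀ hsum hl)).trans hle⟩

theorem continuous_map_dist (hφ : IsYoung φ) {Y : Type*} [PseudoMetricSpace Y] :
    Continuous fun p : Y × Y => φ (dist p.1 p.2) :=
  hφ.1.comp_continuous continuous_dist fun _ => dist_nonneg

theorem convexOn_map_dist (hφ : IsYoung φ) {E : Type*} [SeminormedAddCommGroup E]
    [NormedSpace ℝ E] (a : E) : ConvexOn ℝ univ fun x => φ (dist x a) := by
  refine ⟨convex_univ, fun x _ y _ s t hs ht hst => ?_⟩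
  exact (hφ.mono dist_nonneg ((convexOn_dist a convex_univ).2 trivial trivial hs ht hst)).trans
    (hφ.2.1.2 (mem_Ici.2 dist_nonneg) (mem_Ici.2 dist_nonneg) hs ht hst)

theorem eq_of_tendsto_map_dist_zero (hφ : IsYoung φ) {ι Y : Type*} {l : Filter ι} [l.NeBot]
    [MetricSpace Y] {a b : ι → Y} {x y : Y} (ha : Tendsto a l (𝓝 x)) (hb : Tendsto b l (𝓝 y))
    (h : Tendsto (fun i => φ (dist (a i) (b i))) l (𝓝 0)) : x = y := by
  have hlim := (hφ.continuous_map_dist.tendsto (x, y)).comp (ha.prodMk_nhds hb)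
  have hzero : φ (dist x y) = 0 := tendsto_nhds_unique hlim h
  by_contra hne
  exact (hφ.2.2.2 _ (dist_pos.2 hne)).ne' hzero

end IsYoung

theorem le_mul_rpow_of_forall_le {a P Q G d β : ℝ} (hd : d ≠ 0) (hβ : β < d) (hG : 0 ≤ G)
    (h : ∀ r, 0 < r → a ≤ P * (r ^ β * G) + Q * r ^ (β - d)) :
    a ≤ (P + Q) * G ^ ((d - β) / d) := by
  have hdβ : 0 < d - β := sub_pos.2 hβ
  rcases hG.eq_or_lt with rfl | hG
  · have hlim : Tendsto (fun r : ℝ => Q * r ^ (-(d - β))) atTop (𝓝 0) := by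
      simpa using (tendsto_rpow_neg_atTop hdβ).const_mul Q
    rw [Real.zero_rpow (div_ne_zero hdβ.ne' hd), mul_zero]
    refine ge_of_tendsto hlim ?_
    filter_upwards [eventually_gt_atTop 0] with r hr
    simpa using h r hr
  · have hlocal : (G ^ (-d⁻¹)) ^ β * G = G ^ ((d - β) / d) := by
      nth_rw 2 [← Real.rpow_one G]
      rw [← Real.rpow_mul hG.le, ← Real.rpow_add hG]
      congr 1
      field_simp
      ring
    have htail : (G ^ (-d⁻¹)) ^ (β - d) = G ^ ((d - β) / d) := by
      rw [← Real.rpow_mul hG.le]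
      congr 1
      field_simp
      ring
    -- the scale `r = G ^ (-1 / d)` balances the two terms
    calc a ≤ P * ((G ^ (-d⁻¹)) ^ β * G) + Q * (G ^ (-d⁻¹)) ^ (β - d) := h _ (by positivity)
      _ = (P + Q) * G ^ ((d - β) / d) := by rw [hlocal, htail]; ring

/-! ### Averages and the Gagliardo density -/

theorem ofReal_map_setAverage_le_setLAverage {X E : Type*} [MeasurableSpace X] {μ : Measure X}
    [NormedAddCommGroup E] [NormedSpace ℝ E] [CompleteSpace E] {g : E → ℝ} (hg : ConvexOn ℝ univ g)
    (hgc : Continuous g) (hg₀ : 0 ≤ g) {s : Set X} (hs₀ : μ s ≠ 0) (hs : μ s ≠ ∞) {f : X → E}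
    (hf : IntegrableOn f s μ) :
    ENNReal.ofReal (g (⨍ x in s, f x ∂μ)) ≤ ⨍⁻ x in s, ENNReal.ofReal (g (f x)) ∂μ := by
  have hgf₀ : 0 ≤ᵐ[μ.restrict s] g ∘ f := .of_forall fun x => hg₀ (f x)
  rw [setLAverage_eq]
  by_cases hgf : IntegrableOn (g ∘ f) s μ
  · refine (ENNReal.ofReal_le_ofReal ?_).trans_eq (ofReal_setAverage hgf hgf₀)
    exact hg.map_set_average_le hgc.continuousOn isClosed_univ hs₀ hs (by simp) hf hgf
  · have htop : ∫⁻ x in s, ENNReal.ofReal ((g ∘ f) x) ∂μ = ∞ := by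
      by_contra hne
      exact hgf ((lintegral_ofReal_ne_top_iff_integrable
        (hgc.comp_aestronglyMeasurable hf.aestronglyMeasurable) hgf₀).1 hne)
    exact (ENNReal.div_eq_top.2 (.inr ⟨htop, hs⟩)).ge.trans' le_top

theorem ofReal_map_dist_le {X Y : Type*} [MetricSpace X] [PseudoMetricSpace Y] {φ : ℝ → ℝ}
    {γ D : ℝ} (hφ : IsYoung φ) (hγ : 0 ≤ γ) (v : X → Y)
    {x y : X} (hxy : dist x y ≤ D) :
    ENNReal.ofReal (φ (dist (v x) (v y))) ≤
      ENNReal.ofReal (D ^ γ) * ENNReal.ofReal (φ (dist (v x) (v y)) / dist x y ^ γ) := by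
  have hD : 0 ≤ D := dist_nonneg.trans hxy
  rw [← ENNReal.ofReal_mul (by positivity)]
  refine ENNReal.ofReal_le_ofReal ?_
  rcases eq_or_ne x y with rfl | hne
  · simp [hφ.2.2.1]
  · have hd : 0 < dist x y := dist_pos.2 hne
    rw [mul_div_assoc', le_div_iff₀ (by positivity), mul_comm]
    gcongr
    exact hφ.nonneg_s7 dist_nonneg

/-- The inner integral `∫ φ(‖v(x) - v(y)‖) |x - y|^{-γ} dμ(y)` of the fractional modular, that is,
the energy density of `v` at `x`; in the Euclidean setting `γ = n + β`. -/
noncomputable def gagliardoDensity {X Y : Type*} [PseudoMetricSpace X] [MeasurableSpace X]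
    [PseudoMetricSpace Y] (μ : Measure X) (γ : ℝ) (φ : ℝ → ℝ) (v : X → Y) (x : X) : ℝ≥0∞ :=
  ∫⁻ y, ENNReal.ofReal (φ (dist (v x) (v y)) / dist x y ^ γ) ∂μ

section Averages

variable {X E : Type*} [MetricSpace X] [MeasurableSpace X] {μ : Measure X} [NormedAddCommGroup E]
  [NormedSpace ℝ E] [CompleteSpace E] {φ : ℝ → ℝ} {γ D : ℝ} {v : X → E} {s t : Set X}

theorem ofReal_map_dist_setAverage_le (hφ : IsYoung φ) (hγ : 0 ≤ γ) (hs₀ : μ s ≠ 0) (hs : μ s ≠ ∞)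
    (hsm : MeasurableSet s) (hv : IntegrableOn v s μ) {x : X} (hD : ∀ y ∈ s, dist x y ≤ D) :
    ENNReal.ofReal (φ (dist (v x) (⨍ y in s, v y ∂μ))) ≤
      ENNReal.ofReal (D ^ γ) * gagliardoDensity μ γ φ v x / μ s := by
  calc ENNReal.ofReal (φ (dist (v x) (⨍ y in s, v y ∂μ)))
      ≤ (∫⁻ y in s, ENNReal.ofReal (φ (dist (v x) (v y))) ∂μ) / μ s := by
        simpa only [dist_comm, setLAverage_eq] using
          ofReal_map_setAverage_le_setLAverage (hφ.convexOn_map_dist (v x))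
            (hφ.continuous_map_dist.comp (.prodMk_left (v x))) (fun _ => hφ.nonneg_s7 dist_nonneg)
            hs₀ hs hv
    _ ≤ (∫⁻ y in s, ENNReal.ofReal (D ^ γ) *
          ENNReal.ofReal (φ (dist (v x) (v y)) / dist x y ^ γ) ∂μ) / μ s := by
        gcongr ?_ / _
        exact setLIntegral_mono' hsm fun y hy => ofReal_map_dist_le hφ hγ v (hD y hy)
    _ ≤ ENNReal.ofReal (D ^ γ) * gagliardoDensity μ γ φ v x / μ s := by
        rw [lintegral_const_mul' _ _ ENNReal.ofReal_ne_top]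
        gcongr
        exact setLIntegral_le_lintegral s _

theorem ofReal_map_dist_setAverage_setAverage_le (hφ : IsYoung φ) (hγ : 0 ≤ γ)
    (hs₀ : μ s ≠ 0) (hs : μ s ≠ ∞) (hsm : MeasurableSet s) (hvs : IntegrableOn v s μ)
    (ht₀ : μ t ≠ 0) (ht : μ t ≠ ∞) (htm : MeasurableSet t) (hvt : IntegrableOn v t μ)
    (hD : ∀ x ∈ s, ∀ y ∈ t, dist x y ≤ D) :
    ENNReal.ofReal (φ (dist (⨍ x in s, v x ∂μ) (⨍ y in t, v y ∂μ))) ≤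
      ENNReal.ofReal (D ^ γ) / μ t * (∫⁻ x, gagliardoDensity μ γ φ v x ∂μ) / μ s := by
  calc ENNReal.ofReal (φ (dist (⨍ x in s, v x ∂μ) (⨍ y in t, v y ∂μ)))
      ≤ (∫⁻ x in s, ENNReal.ofReal (φ (dist (v x) (⨍ y in t, v y ∂μ))) ∂μ) / μ s := by
        simpa only [setLAverage_eq] using
          ofReal_map_setAverage_le_setLAverage (hφ.convexOn_map_dist (⨍ y in t, v y ∂μ))
            (hφ.continuous_map_dist.comp (.prodMk_left _)) (fun _ => hφ.nonneg_s7 dist_nonneg)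
            hs₀ hs hvs
    _ ≤ (∫⁻ x in s, ENNReal.ofReal (D ^ γ) / μ t * gagliardoDensity μ γ φ v x ∂μ) / μ s := by
        gcongr ?_ / _
        refine setLIntegral_mono' hsm fun x hx => ?_
        rw [← ENNReal.mul_div_right_comm]
        exact ofReal_map_dist_setAverage_le hφ hγ ht₀ ht htm hvt (hD x hx)
    _ ≤ ENNReal.ofReal (D ^ γ) / μ t * (∫⁻ x, gagliardoDensity μ γ φ v x ∂μ) / μ s := by
        rw [lintegral_const_mul' _ _ (ENNReal.div_ne_top ENNReal.ofReal_ne_top ht₀)]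
        gcongr
        exact Measure.restrict_le_self

end Averages

/-! ### Lower Ahlfors regular measures -/

/-- Lower Ahlfors `d`-regularity at every scale: `ω rᵈ ≤ μ(B(x, r))` for all centres `x` and all
radii `r > 0`, as for Lebesgue measure on `ℝᵈ`. It supplies the decay of averages over growing
balls; the dimension `d` may be any real number. -/
def IsLowerAhlforsRegular {X : Type*} [PseudoMetricSpace X] [MeasurableSpace X] (μ : Measure X)
    (ω d : ℝ) : Prop :=
  0 < ω ∧ ∀ x r, 0 < r → ENNReal.ofReal (ω * r ^ d) ≤ μ (ball x r)

theorem isLowerAhlforsRegular_addHaar {E : Type*} [NormedAddCommGroup E] [NormedSpace ℝ E]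
    [FiniteDimensional ℝ E] [MeasurableSpace E] [BorelSpace E] (μ : Measure E)
    [μ.IsAddHaarMeasure] :
    IsLowerAhlforsRegular μ (μ.real (ball 0 1)) (Module.finrank ℝ E) := by
  refine ⟨ENNReal.toReal_pos (measure_ball_pos μ _ one_pos).ne' measure_ball_lt_top.ne,
    fun x r hr => ?_⟩
  rw [Measure.addHaar_ball_of_pos μ x hr, mul_comm, Real.rpow_natCast,
    ENNReal.ofReal_mul (by positivity), ofReal_measureReal]

theorem integrableOn_ball {X E : Type*} [PseudoMetricSpace X] [ProperSpace X] [MeasurableSpace X]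
    {μ : Measure X} [NormedAddCommGroup E] {v : X → E} (hv : LocallyIntegrable v μ) (x : X)
    (r : ℝ) : IntegrableOn v (ball x r) μ :=
  (hv.integrableOn_isCompact (isCompact_closedBall x r)).mono_set ball_subset_closedBall

namespace IsLowerAhlforsRegular

theorem measure_ball_ne_zero {X : Type*} [PseudoMetricSpace X] [MeasurableSpace X] {μ : Measure X}
    {ω d r : ℝ} (hμ : IsLowerAhlforsRegular μ ω d) (x : X) (hr : 0 < r) : μ (ball x r) ≠ 0 := by
  have hω := hμ.1
  exact ((ENNReal.ofReal_pos.2 (by positivity)).trans_le (hμ.2 x r hr)).ne'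

variable {X E : Type*} [MetricSpace X] [ProperSpace X] [MeasurableSpace X] [BorelSpace X]
  {μ : Measure X} [IsFiniteMeasureOnCompacts μ] [NormedAddCommGroup E] {v : X → E}
  [NormedSpace ℝ E] [CompleteSpace E] {ω d β K : ℝ} {φ : ℝ → ℝ}

theorem map_dist_average_ball_le (hμ : IsLowerAhlforsRegular μ ω d) (hφ : IsYoung φ)
    (hβ : 0 ≤ d + β) (hv : LocallyIntegrable v μ) {x : X}
    (hx : gagliardoDensity μ (d + β) φ v x ≠ ∞) {r : ℝ} (hr : 0 < r) :
    φ (dist (v x) (⨍ y in ball x r, v y ∂μ)) ≤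
      ω⁻¹ * (r ^ β * (gagliardoDensity μ (d + β) φ v x).toReal) := by
  have hω := hμ.1
  rw [← ENNReal.ofReal_le_ofReal_iff (by positivity)]
  calc ENNReal.ofReal (φ (dist (v x) (⨍ y in ball x r, v y ∂μ)))
      ≤ ENNReal.ofReal (r ^ (d + β)) * gagliardoDensity μ (d + β) φ v x / μ (ball x r) :=
        ofReal_map_dist_setAverage_le hφ hβ (hμ.measure_ball_ne_zero x hr) measure_ball_lt_top.ne
          measurableSet_ball (integrableOn_ball hv x r) fun y hy => (mem_ball'.1 hy).le
    _ ≤ ENNReal.ofReal (r ^ (d + β)) * gagliardoDensity μ (d + β) φ v x /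
          ENNReal.ofReal (ω * r ^ d) := by
        gcongr
        exact hμ.2 x r hr
    _ = ENNReal.ofReal (ω⁻¹ * (r ^ β * (gagliardoDensity μ (d + β) φ v x).toReal)) := by
        nth_rw 1 [← ENNReal.ofReal_toReal hx]
        rw [← ENNReal.ofReal_mul (by positivity), ← ENNReal.ofReal_div_of_pos (by positivity),
          Real.rpow_add hr]
        congr 1
        field_simp

theorem map_dist_average_ball_average_ball_le (hμ : IsLowerAhlforsRegular μ ω d) (hφ : IsYoung φ)
    (hβ : 0 ≤ d + β) (hv : LocallyIntegrable v μ)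
    (hv₁ : ∫⁻ x, gagliardoDensity μ (d + β) φ v x ∂μ ≤ 1) {z w : X} {ρ r s M : ℝ} (hρ : 0 < ρ)
    (hr : ρ ≤ r) (hs : ρ ≤ s) (hM : r + dist z w + s ≤ M * ρ) :
    φ (dist (⨍ x in ball z r, v x ∂μ) (⨍ y in ball w s, v y ∂μ)) ≤
      M ^ (d + β) / ω ^ 2 * ρ ^ (β - d) := by
  have hω := hμ.1
  have hM₀ : 0 ≤ M := nonneg_of_mul_nonneg_left
    ((by have := dist_nonneg (x := z) (y := w); linarith : 0 ≤ r + dist z w + s).trans hM) hρ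
  have hball (x : X) {r : ℝ} (hr : ρ ≤ r) : ENNReal.ofReal (ω * ρ ^ d) ≤ μ (ball x r) :=
    (hμ.2 x ρ hρ).trans (measure_mono (ball_subset_ball hr))
  have hdist : ∀ x ∈ ball z r, ∀ y ∈ ball w s, dist x y ≤ M * ρ := fun x hx y hy => by
    linarith [dist_triangle4 x z w y, mem_ball.1 hx, mem_ball'.1 hy]
  rw [← ENNReal.ofReal_le_ofReal_iff (by positivity)]
  calc ENNReal.ofReal (φ (dist (⨍ x in ball z r, v x ∂μ) (⨍ y in ball w s, v y ∂μ)))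
      ≤ ENNReal.ofReal ((M * ρ) ^ (d + β)) / μ (ball w s) *
          (∫⁻ x, gagliardoDensity μ (d + β) φ v x ∂μ) / μ (ball z r) :=
        ofReal_map_dist_setAverage_setAverage_le hφ hβ
          (hμ.measure_ball_ne_zero z (hρ.trans_le hr)) measure_ball_lt_top.ne measurableSet_ball
          (integrableOn_ball hv z r)
          (hμ.measure_ball_ne_zero w (hρ.trans_le hs)) measure_ball_lt_top.ne measurableSet_ball
          (integrableOn_ball hv w s) hdist
    _ ≤ ENNReal.ofReal ((M * ρ) ^ (d + β)) / ENNReal.ofReal (ω * ρ ^ d) * 1 /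
          ENNReal.ofReal (ω * ρ ^ d) := by
        gcongr
        exacts [hball w hs, hball z hr]
    _ = ENNReal.ofReal (M ^ (d + β) / ω ^ 2 * ρ ^ (β - d)) := by
        rw [mul_one, ← ENNReal.ofReal_div_of_pos (by positivity),
          ← ENNReal.ofReal_div_of_pos (by positivity), Real.mul_rpow hM₀ hρ.le,
          Real.rpow_add hρ, Real.rpow_sub hρ]
        congr 1
        field_simp

theorem exists_tendsto_average_ball (hμ : IsLowerAhlforsRegular μ ω d) (hφ : IsYoung φ)
    (hK : IsDoubling φ K) (hβ : β ∈ Ico (-d) d) :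
    ∃ C > 0, ∀ v : X → E, LocallyIntegrable v μ →
      ∫⁻ x, gagliardoDensity μ (d + β) φ v x ∂μ ≤ 1 → ∀ (z : X) (r : ℝ), 0 < r →
        ∃ c, Tendsto (fun k : ℕ => ⨍ y in ball z (2 ^ k * r), v y ∂μ) atTop (𝓝 c) ∧
          φ (dist (⨍ y in ball z r, v y ∂μ) c) ≤ C * r ^ (β - d) := by
  have hω := hμ.1
  have hdβ : 0 ≤ d + β := by linarith [hβ.1]
  have hθ₁ : (2 : ℝ) ^ (β - d) < 1 :=
    Real.rpow_lt_one_of_one_lt_of_neg one_lt_two (sub_neg.2 hβ.2)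
  obtain ⟨C, hC₀, hC⟩ :=
    hφ.exists_tendsto_of_map_dist_le hK (Real.rpow_pos_of_pos two_pos _) hθ₁ (Y := E)
  refine ⟨C * (3 ^ (d + β) / ω ^ 2), by positivity, fun v hv hv₁ z r hr => ?_⟩
  obtain ⟨c, hc, hφc⟩ := hC (3 ^ (d + β) / ω ^ 2 * r ^ (β - d))
    (fun k => ⨍ y in ball z (2 ^ k * r), v y ∂μ) (by positivity) fun k => by
      have hk : 0 < 2 ^ k * r := by positivity
      calc φ (dist (⨍ y in ball z (2 ^ k * r), v y ∂μ) (⨍ y in ball z (2 ^ (k + 1) * r), v y ∂μ))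
          ≤ 3 ^ (d + β) / ω ^ 2 * (2 ^ k * r) ^ (β - d) :=
            hμ.map_dist_average_ball_average_ball_le hφ hdβ hv hv₁ hk le_rfl
              (by rw [pow_succ]; linarith) (by rw [dist_self, pow_succ]; linarith)
        _ = (2 ^ (β - d)) ^ k * (3 ^ (d + β) / ω ^ 2 * r ^ (β - d)) := by
            rw [Real.mul_rpow (by positivity) hr.le, Real.rpow_pow_comm zero_le_two]
            ring
  exact ⟨c, hc, by simpa [mul_assoc] using hφc⟩

theorem tendsto_map_dist_average_ball (hμ : IsLowerAhlforsRegular μ ω d) (hφ : IsYoung φ)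
    (hβ : β ∈ Ico (-d) d) (hv : LocallyIntegrable v μ)
    (hv₁ : ∫⁻ x, gagliardoDensity μ (d + β) φ v x ∂μ ≤ 1) (z w : X) {r s : ℝ} (hr : 0 < r)
    (hs : 0 < s) :
    Tendsto (fun k : ℕ => φ (dist (⨍ x in ball z (2 ^ k * r), v x ∂μ)
      (⨍ y in ball w (2 ^ k * s), v y ∂μ))) atTop (𝓝 0) := by
  set ρ := min r s
  have hρ : 0 < ρ := lt_min hr hs
  set M := (r + dist z w + s) / ρ with hM
  have hscale : Tendsto (fun k : ℕ => 2 ^ k * ρ) atTop atTop :=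
    (tendsto_pow_atTop_atTop_of_one_lt one_lt_two).atTop_mul_const hρ
  have hlim : Tendsto (fun k : ℕ => M ^ (d + β) / ω ^ 2 * (2 ^ k * ρ) ^ (β - d)) atTop (𝓝 0) := by
    simpa using ((tendsto_rpow_neg_atTop (sub_pos.2 hβ.2)).comp hscale).const_mul
      (M ^ (d + β) / ω ^ 2)
  refine squeeze_zero (fun k => hφ.nonneg_s7 dist_nonneg) (fun k => ?_) hlim
  refine hμ.map_dist_average_ball_average_ball_le hφ (by linarith [hβ.1]) hv hv₁ (by positivity)
    (by gcongr; exact min_le_left r s) (by gcongr; exact min_le_right r s) ?_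
  calc 2 ^ k * r + dist z w + 2 ^ k * s ≤ 2 ^ k * r + 2 ^ k * dist z w + 2 ^ k * s := by
        gcongr
        exact le_mul_of_one_le_left dist_nonneg (one_le_pow₀ one_le_two)
    _ = M * (2 ^ k * ρ) := by rw [hM]; field_simp

theorem exists_map_dist_average_ball_const_le (hμ : IsLowerAhlforsRegular μ ω d) (hφ : IsYoung φ)
    (hK : IsDoubling φ K) (hβ : β ∈ Ico (-d) d) :
    ∃ C > 0, ∀ v : X → E, LocallyIntegrable v μ →
      ∫⁻ x, gagliardoDensity μ (d + β) φ v x ∂μ ≤ 1 →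
        ∃ c, ∀ (z : X) (r : ℝ), 0 < r →
          φ (dist (⨍ y in ball z r, v y ∂μ) c) ≤ C * r ^ (β - d) := by
  obtain ⟨C, hC₀, hC⟩ := hμ.exists_tendsto_average_ball (E := E) hφ hK hβ
  refine ⟨C, hC₀, fun v hv hv₁ => ?_⟩
  rcases isEmpty_or_nonempty X with _ | ⟨⟨x₀⟩⟩
  · exact ⟨0, isEmptyElim⟩
  obtain ⟨c, hc, -⟩ := hC v hv hv₁ x₀ 1 one_pos
  refine ⟨c, fun z r hr => ?_⟩
  obtain ⟨c', hc', hle⟩ := hC v hv hv₁ z r hr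
  have hc'c : c' = c := hφ.eq_of_tendsto_map_dist_zero hc' hc
    (hμ.tendsto_map_dist_average_ball hφ hβ hv hv₁ z x₀ hr one_pos)
  rwa [← hc'c]

theorem exists_map_dist_const_le_mul_rpow (hμ : IsLowerAhlforsRegular μ ω d) (hφ : IsYoung φ)
    (hK : IsDoubling φ K) (hβ : β ∈ Ioo (-d) d) :
    ∃ A > 0, ∀ v : X → E, LocallyIntegrable v μ →
      ∫⁻ x, gagliardoDensity μ (d + β) φ v x ∂μ ≤ 1 →
        ∃ c, ∀ x, gagliardoDensity μ (d + β) φ v x ≠ ∞ →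
          φ (dist (v x) c) ≤ A * (gagliardoDensity μ (d + β) φ v x).toReal ^ ((d - β) / d) := by
  have hω := hμ.1
  have hK₀ : 0 < K := one_pos.trans hK.1
  have hd : 0 < d := by linarith [hβ.1, hβ.2]
  obtain ⟨C, hC₀, hC⟩ :=
    hμ.exists_map_dist_average_ball_const_le (E := E) hφ hK (Ioo_subset_Ico_self hβ)
  refine ⟨K / 2 * ω⁻¹ + K / 2 * C, by positivity, fun v hv hv₁ => ?_⟩
  obtain ⟨c, hc⟩ := hC v hv hv₁
  refine ⟨c, fun x hx =>
    le_mul_rpow_of_forall_le hd.ne' hβ.2 ENNReal.toReal_nonneg fun r hr => ?_⟩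
  set m := ⨍ y in ball x r, v y ∂μ
  calc φ (dist (v x) c) ≤ φ (dist (v x) m + dist m c) :=
        hφ.mono dist_nonneg (dist_triangle _ _ _)
    _ ≤ K / 2 * (φ (dist (v x) m) + φ (dist m c)) := hφ.map_add_le hK dist_nonneg dist_nonneg
    _ ≤ K / 2 * (ω⁻¹ * (r ^ β * (gagliardoDensity μ (d + β) φ v x).toReal) +
          C * r ^ (β - d)) := by
        gcongr
        exacts [hμ.map_dist_average_ball_le hφ (by linarith [hβ.1]) hv hx hr, hc x r hr]
    _ = K / 2 * ω⁻¹ * (r ^ β * (gagliardoDensity μ (d + β) φ v x).toReal) +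
          K / 2 * C * r ^ (β - d) := by ring

theorem exists_lintegral_map_dist_div_rpow_le_one (hμ : IsLowerAhlforsRegular μ ω d)
    (hφ : IsYoung φ) (hK : IsDoubling φ K) (hβ : β ∈ Ioo (-d) d) :
    ∃ A > 0, ∀ v : X → E, LocallyIntegrable v μ →
      ∫⁻ x, gagliardoDensity μ (d + β) φ v x ∂μ ≤ 1 →
        ∃ c, ∫⁻ x, ENNReal.ofReal (φ (dist (v x) c / A) ^ (d / (d - β))) ∂μ ≤ 1 := by
  have hd : 0 < d := by linarith [hβ.1, hβ.2]
  have hdβ : 0 < d - β := sub_pos.2 hβ.2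
  obtain ⟨A, -, hA⟩ := hμ.exists_map_dist_const_le_mul_rpow (E := E) hφ hK hβ
  have hA₁ : 0 < max 1 A := one_pos.trans_le (le_max_left 1 A)
  refine ⟨max 1 A, hA₁, fun v hv hv₁ => ?_⟩
  obtain ⟨c, hc⟩ := hA v hv hv₁
  refine ⟨c, (lintegral_mono fun x => ?_).trans hv₁⟩
  rcases eq_or_ne (gagliardoDensity μ (d + β) φ v x) ∞ with hx | hx
  · exact hx ▸ le_top
  refine ENNReal.ofReal_le_of_le_toReal ?_
  set G := (gagliardoDensity μ (d + β) φ v x).toReal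
  have hφG : φ (dist (v x) c / max 1 A) ≤ G ^ ((d - β) / d) := calc
    φ (dist (v x) c / max 1 A) ≤ (max 1 A)⁻¹ * φ (dist (v x) c) := by
      rw [div_eq_inv_mul]
      exact hφ.map_mul_le_s7 (inv_nonneg.2 hA₁.le) (inv_le_one_of_one_le₀ (le_max_left 1 A))
        dist_nonneg
    _ ≤ (max 1 A)⁻¹ * (max 1 A * G ^ ((d - β) / d)) := by
      gcongr
      exact (hc x hx).trans (by gcongr; exact le_max_right 1 A)
    _ = G ^ ((d - β) / d) := inv_mul_cancel_left₀ hA₁.ne' _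
  calc φ (dist (v x) c / max 1 A) ^ (d / (d - β)) ≤ (G ^ ((d - β) / d)) ^ (d / (d - β)) := by
        gcongr
        exact hφ.nonneg_s7 (by positivity)
    _ = G := by
        rw [← inv_div d, Real.rpow_inv_rpow ENNReal.toReal_nonneg (by positivity)]

end IsLowerAhlforsRegular

/-! ### The Poincaré inequality -/

/-- The Luxemburg norm of `u` in the Orlicz space `L^ψ(μ)`; with `μ` Lebesgue measure on a set `Ω`
it is `luxNorm`. -/
noncomputable def luxemburgNorm {X E : Type*} [MeasurableSpace X] [Norm E] (μ : Measure X)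
    (ψ : ℝ → ℝ) (u : X → E) : ℝ≥0∞ :=
  sInf {lam : ℝ≥0∞ | 0 < lam ∧ lam ≠ ∞ ∧
    ∫⁻ x, ENNReal.ofReal (ψ (‖u x‖ / lam.toReal)) ∂μ ≤ 1}

/-- The Luxemburg-type seminorm of the modular `∬ φ(|u(x) - u(y)|) |x - y|^{-γ} dμ(x) dμ(y)`; with
`γ = n + β` and `μ` Lebesgue measure on a set `Ω` it is `fracNorm`. -/
noncomputable def gagliardoNorm {X Y : Type*} [PseudoMetricSpace X] [MeasurableSpace X]
    [PseudoMetricSpace Y] (μ : Measure X) (γ : ℝ) (φ : ℝ → ℝ) (u : X → Y) : ℝ≥0∞ :=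
  sInf {lam : ℝ≥0∞ | 0 < lam ∧ lam ≠ ∞ ∧
    ∫⁻ x, ∫⁻ y, ENNReal.ofReal (φ (dist (u x) (u y) / lam.toReal) / dist x y ^ γ) ∂μ ∂μ ≤ 1}

theorem dist_inv_smul {E : Type*} [SeminormedAddCommGroup E] [NormedSpace ℝ E] {L : ℝ}
    (hL : 0 ≤ L) (x y : E) : dist (L⁻¹ • x) (L⁻¹ • y) = dist x y / L := by
  rw [dist_smul₀, norm_inv, Real.norm_of_nonneg hL, inv_mul_eq_div]

theorem poincare_orlicz_global_general {X E : Type*} [MetricSpace X] [ProperSpace X]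
    [MeasurableSpace X] [BorelSpace X] {μ : Measure X} [IsFiniteMeasureOnCompacts μ]
    [NormedAddCommGroup E] [NormedSpace ℝ E] [CompleteSpace E] {ω d β K : ℝ} {φ : ℝ → ℝ}
    (hμ : IsLowerAhlforsRegular μ ω d) (hβ : β ∈ Ioo (-d) d) (hφ : IsYoung φ)
    (hK : IsDoubling φ K) :
    ∃ C > (0 : ℝ), ∀ u : X → E, LocallyIntegrable u μ →
      ⨅ c : E, luxemburgNorm μ (fun t => φ t ^ (d / (d - β))) (fun x => u x - c) ≤
        ENNReal.ofReal C * gagliardoNorm μ (d + β) φ u := by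
  obtain ⟨A, hA₀, hA⟩ := hμ.exists_lintegral_map_dist_div_rpow_le_one (E := E) hφ hK hβ
  have hA₀' : ENNReal.ofReal A ≠ 0 := (ENNReal.ofReal_pos.2 hA₀).ne'
  refine ⟨A, hA₀, fun u hu => ?_⟩
  rw [mul_comm, ← ENNReal.div_le_iff hA₀' ENNReal.ofReal_ne_top]
  refine le_sInf fun lam ⟨hlam₀, hlam, hu₁⟩ => ?_
  rw [ENNReal.div_le_iff hA₀' ENNReal.ofReal_ne_top]
  set L := lam.toReal with hL
  have hL₀ : 0 < L := ENNReal.toReal_pos hlam₀.ne' hlam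
  obtain ⟨c, hc⟩ := hA (L⁻¹ • u) (hu.smul L⁻¹) <| by
    simpa only [gagliardoDensity, Pi.smul_apply, dist_inv_smul hL₀.le] using hu₁
  refine (iInf_le _ (L • c)).trans (sInf_le ⟨ENNReal.mul_pos hlam₀.ne' hA₀',
    ENNReal.mul_ne_top hlam ENNReal.ofReal_ne_top, ?_⟩)
  have hscale (x : X) : ‖u x - L • c‖ / (lam * ENNReal.ofReal A).toReal =
      dist ((L⁻¹ • u) x) c / A := by
    rw [ENNReal.toReal_mul, ENNReal.toReal_ofReal hA₀.le, ← hL, ← div_div, ← dist_eq_norm,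
      ← dist_inv_smul hL₀.le, inv_smul_smul₀ hL₀.ne', Pi.smul_apply]
  simpa only [hscale] using hc

/-- global `(φ^{n/(n-β)},φ)_β`-Poincaré inequality on `ℝⁿ`, `0 < β < n`. -/
theorem poincare_orlicz_global
    (n : ℕ) (hn : 1 ≤ n) (β : ℝ) (hβ : β ∈ Set.Ioo (0 : ℝ) (n : ℝ))
    (φ : ℝ → ℝ) (hφ : IsYoung φ) (hdbl : ∃ K : ℝ, IsDoubling φ K)
    (hCβ : CbetaFinite β φ) :
    ∃ C > (0 : ℝ), ∀ u : EuclideanSpace ℝ (Fin n) → ℝ,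
      MemW n β φ Set.univ u →
        (⨅ c : ℝ, luxNorm n (fun t => φ t ^ ((n : ℝ) / ((n : ℝ) - β))) Set.univ
            (fun x => u x - c))
          ≤ ENNReal.ofReal C * fracNorm n β φ Set.univ u := by
  have hvol := isLowerAhlforsRegular_addHaar (volume : Measure (EuclideanSpace ℝ (Fin n)))
  rw [finrank_euclideanSpace_fin] at hvol
  obtain ⟨C, hC₀, hC⟩ := poincare_orlicz_global_general (E := ℝ) hvol
    (Ioo_subset_Ioo_left (by simp) hβ) hφ hdbl.choose_spec
  refine ⟨C, hC₀, fun u hu => ?_⟩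
  simpa only [luxNorm, fracNorm, fracIntegral, luxemburgNorm, gagliardoNorm, Real.dist_eq,
    Real.norm_eq_abs, Measure.restrict_univ]
    using hC u (locallyIntegrableOn_univ.1 hu.1)
end

section
/- Let n ≥ 1 and β ∈ (0,n). Then there exists a constant C(n,β) > 0, depending only on n and β, such that for every ball B ⊂ ℝⁿ, every x ∈ B, and every measurable set E ⊂ B with 0 < |E| < |B|/2, one has ∫_{B∖E} |x−y|^{−n−β} dy ≥ C(n,β) |E|^{−β/n}. -/
open MeasureTheory Metric Set Filter
open scoped ENNReal NNReal Topology Classical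

/-!
Let `s` be the radius of a ball of volume `2|E|`, so that `s ≤ r`. Moving `x` towards the centre of
`B` by the fraction `s / r` gives a ball of radius `s` lying both in `B` and in `B(x, 2s)`. At least
half of it is disjoint from `E`, and there the kernel is at least `(2s)^{-n-β}`. Hence the integral
is at least `|E| (2s)^{-n-β}`, and `s` is proportional to `|E|^{1/n}`.
-/

open Module

section Kernel

variable {X : Type*} [MeasurableSpace X] {μ : Measure X}

lemma measure_le_measure_sdiff_of_two_mul_le {s t : Set X} (hs : μ s ≠ ∞)
    (hst : 2 * μ s ≤ μ t) : μ s ≤ μ (t \ s) := by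
  refine le_trans ?_ le_measure_sdiff
  rw [two_mul] at hst
  exact ENNReal.le_sub_of_add_le_left hs hst

lemma ofReal_mul_measure_le_setLIntegral_one_div_dist_rpow [MetricSpace X]
    [OpensMeasurableSpace X] [NullSingletonClass μ] {x : X} {R γ : ℝ} (hγ : 0 ≤ γ) {A : Set X}
    (hA : A ⊆ closedBall x R) :
    ENNReal.ofReal (1 / R ^ γ) * μ A ≤ ∫⁻ y in A, ENNReal.ofReal (1 / dist x y ^ γ) ∂μ := by
  -- The point `x` is removed because the kernel takes the junk value `1 / 0 = 0` there.
  calc ENNReal.ofReal (1 / R ^ γ) * μ A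
      = ∫⁻ _ in A \ {x}, ENNReal.ofReal (1 / R ^ γ) ∂μ := by
        rw [setLIntegral_const, measure_sdiff_null (measure_singleton x)]
    _ ≤ ∫⁻ y in A \ {x}, ENNReal.ofReal (1 / dist x y ^ γ) ∂μ := by
        refine setLIntegral_mono (by fun_prop) fun y hy ↦ ?_
        have hpos : 0 < dist x y := dist_pos.2 (Ne.symm hy.2)
        have hle : dist x y ≤ R := mem_closedBall'.1 (hA hy.1)
        gcongr
    _ ≤ ∫⁻ y in A, ENNReal.ofReal (1 / dist x y ^ γ) ∂μ := lintegral_mono_set sdiff_subset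

end Kernel

lemma exists_ball_subset_ball_inter_ball {F : Type*} [NormedAddCommGroup F] [NormedSpace ℝ F]
    {z x : F} {r s : ℝ} (hs : 0 < s) (hsr : s ≤ r) (hx : x ∈ closedBall z r) :
    ∃ w : F, ball w s ⊆ ball z r ∩ ball x (2 * s) := by
  have hr : 0 < r := hs.trans_le hsr
  have hratio : 0 ≤ 1 - s / r := sub_nonneg.2 ((div_le_one hr).2 hsr)
  have hmul : s / r * r = s := div_mul_cancel₀ s hr.ne'
  have hxz : dist x z ≤ r := hx
  refine ⟨AffineMap.lineMap x z (s / r),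
    subset_inter (ball_subset_ball' ?_) (ball_subset_ball' ?_)⟩
  · rw [dist_lineMap_right, Real.norm_of_nonneg hratio]
    have : (1 - s / r) * dist x z ≤ (1 - s / r) * r := by gcongr
    linarith
  · rw [dist_lineMap_left, Real.norm_of_nonneg (by positivity)]
    have : s / r * dist x z ≤ s / r * r := by gcongr
    linarith

lemma measureReal_ball_pos {X : Type*} [PseudoMetricSpace X] [ProperSpace X] [MeasurableSpace X]
    (μ : Measure X) [μ.IsOpenPosMeasure] [IsFiniteMeasureOnCompacts μ] (x : X) {r : ℝ}
    (hr : 0 < r) : 0 < μ.real (ball x r) :=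
  ENNReal.toReal_pos (measure_ball_pos μ x hr).ne' measure_ball_lt_top.ne

section VolumeRadius

variable {F : Type*} [NormedAddCommGroup F] [NormedSpace ℝ F] [MeasurableSpace F] (μ : Measure F)

/-- The radius of a ball of volume `v` for a Haar measure `μ` on a finite-dimensional real normed
space; meant for `0 ≤ v`. -/
noncomputable def volumeRadius (v : ℝ) : ℝ :=
  (v / μ.real (ball 0 1)) ^ (1 / (finrank ℝ F : ℝ))

lemma volumeRadius_mul {a b : ℝ} (ha : 0 ≤ a) (hb : 0 ≤ b) :
    volumeRadius μ (a * b) = volumeRadius μ a * b ^ (1 / (finrank ℝ F : ℝ)) := by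
  rw [volumeRadius, volumeRadius, mul_div_right_comm, Real.mul_rpow (by positivity) hb]

lemma volumeRadius_nonneg {v : ℝ} (hv : 0 ≤ v) : 0 ≤ volumeRadius μ v :=
  Real.rpow_nonneg (by positivity) _

lemma volumeRadius_pos [FiniteDimensional ℝ F] [μ.IsAddHaarMeasure] {v : ℝ} (hv : 0 < v) :
    0 < volumeRadius μ v :=
  Real.rpow_pos_of_pos (div_pos hv (measureReal_ball_pos μ 0 one_pos)) _

variable [FiniteDimensional ℝ F] [Nontrivial F]

lemma volumeRadius_pow_finrank {v : ℝ} (hv : 0 ≤ v) :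
    volumeRadius μ v ^ finrank ℝ F = v / μ.real (ball 0 1) := by
  rw [volumeRadius, one_div, Real.rpow_inv_natCast_pow (by positivity) finrank_pos.ne']

lemma one_div_mul_volumeRadius_mul_rpow_mul (β : ℝ) {a v m : ℝ} (ha : 0 ≤ a) (hv : 0 ≤ v)
    (hm : 0 < m) :
    1 / (a * volumeRadius μ (v * m)) ^ (finrank ℝ F + β) * m =
      1 / (a * volumeRadius μ v) ^ (finrank ℝ F + β) * m ^ (-(β / finrank ℝ F)) := by
  have hn : (0 : ℝ) < finrank ℝ F := by exact_mod_cast finrank_pos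
  have hexp : (m ^ (1 / (finrank ℝ F : ℝ))) ^ (finrank ℝ F + β) =
      m * m ^ (β / finrank ℝ F) := by
    rw [← Real.rpow_mul hm.le, mul_add, one_div_mul_cancel hn.ne', Real.rpow_add hm,
      Real.rpow_one, one_div_mul_eq_div]
  rw [volumeRadius_mul μ hv hm.le, ← mul_assoc,
    Real.mul_rpow (mul_nonneg ha (volumeRadius_nonneg μ hv)) (by positivity), hexp,
    Real.rpow_neg hm.le]
  field_simp

variable [BorelSpace F] [μ.IsAddHaarMeasure]

lemma measureReal_ball_eq_pow_finrank_mul (z : F) {r : ℝ} (hr : 0 ≤ r) :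
    μ.real (ball z r) = r ^ finrank ℝ F * μ.real (ball 0 1) := by
  rw [← Measure.addHaar_real_closedBall_eq_addHaar_real_ball,
    Measure.addHaar_real_closedBall μ z hr]

lemma measure_ball_volumeRadius (z : F) {v : ℝ} (hv : 0 < v) :
    μ (ball z (volumeRadius μ v)) = ENNReal.ofReal v := by
  rw [← ofReal_measureReal measure_ball_lt_top.ne,
    measureReal_ball_eq_pow_finrank_mul μ z (volumeRadius_pos μ hv).le,
    volumeRadius_pow_finrank μ hv.le,
    div_mul_cancel₀ _ (measureReal_ball_pos μ 0 one_pos).ne']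

lemma volumeRadius_le {z : F} {r v : ℝ} (hr : 0 ≤ r) (hv : 0 ≤ v)
    (h : ENNReal.ofReal v ≤ μ (ball z r)) : volumeRadius μ v ≤ r := by
  refine le_of_pow_le_pow_left₀ (finrank_pos (R := ℝ) (M := F)).ne' hr ?_
  rwa [volumeRadius_pow_finrank μ hv, div_le_iff₀ (measureReal_ball_pos μ 0 one_pos),
    ← measureReal_ball_eq_pow_finrank_mul μ z hr, measureReal_def,
    ← ENNReal.ofReal_le_iff_le_toReal measure_ball_lt_top.ne]

end VolumeRadius

theorem geometric_inequality_general {F : Type*} [NormedAddCommGroup F] [NormedSpace ℝ F]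
    [FiniteDimensional ℝ F] [Nontrivial F] [MeasurableSpace F] [BorelSpace F] (μ : Measure F)
    [μ.IsAddHaarMeasure] {β : ℝ} (hβ : -(finrank ℝ F : ℝ) ≤ β) :
    ∃ C > (0 : ℝ), ∀ (z : F) (r : ℝ), ∀ x ∈ closedBall z r, ∀ E : Set F,
      0 < μ E → 2 * μ E ≤ μ (ball z r) →
        ENNReal.ofReal (C * μ.real E ^ (-(β / finrank ℝ F))) ≤
          ∫⁻ y in ball z r \ E, ENNReal.ofReal (1 / dist x y ^ (finrank ℝ F + β)) ∂μ := by
  have hc := volumeRadius_pos μ two_pos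
  refine ⟨1 / (2 * volumeRadius μ 2) ^ (finrank ℝ F + β), by positivity,
    fun z r x hx E hE hEr ↦ ?_⟩
  have hE_top : μ E ≠ ∞ := fun h ↦ by simp [h, measure_ball_lt_top.ne] at hEr
  have hm : 0 < μ.real E := ENNReal.toReal_pos hE.ne' hE_top
  have hdouble : ENNReal.ofReal (2 * μ.real E) = 2 * μ E := by
    rw [ENNReal.ofReal_mul zero_le_two, ENNReal.ofReal_ofNat, ofReal_measureReal hE_top]
  set s := volumeRadius μ (2 * μ.real E)
  have hs : 0 < s := volumeRadius_pos μ (by positivity)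
  have hsr : s ≤ r :=
    volumeRadius_le μ (nonempty_closedBall.1 ⟨x, hx⟩) (by positivity) (hdouble.trans_le hEr)
  obtain ⟨w, hw⟩ := exists_ball_subset_ball_inter_ball hs hsr hx
  have hball : 2 * μ E = μ (ball w s) := by
    rw [measure_ball_volumeRadius μ w (by positivity), hdouble]
  calc ENNReal.ofReal _ = ENNReal.ofReal (1 / (2 * s) ^ (finrank ℝ F + β)) * μ E := by
        rw [← one_div_mul_volumeRadius_mul_rpow_mul μ β zero_le_two zero_le_two hm,
          ENNReal.ofReal_mul (by positivity), ofReal_measureReal hE_top]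
    _ ≤ ENNReal.ofReal (1 / (2 * s) ^ (finrank ℝ F + β)) * μ (ball w s \ E) := by
        grw [← measure_le_measure_sdiff_of_two_mul_le hE_top hball.le]
    _ ≤ ∫⁻ y in ball w s \ E, ENNReal.ofReal (1 / dist x y ^ (finrank ℝ F + β)) ∂μ :=
        ofReal_mul_measure_le_setLIntegral_one_div_dist_rpow (by linarith) <|
          sdiff_subset.trans <| hw.trans <| inter_subset_right.trans ball_subset_closedBall
    _ ≤ _ := lintegral_mono_set <| sdiff_subset_sdiff_left <| hw.trans inter_subset_left

/-- geometric inequality: `∫_{B∖E} |x-y|^{-n-β} dy ≥ C(n,β) |E|^{-β/n}`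
whenever `E ⊆ B` with `0 < |E| < |B|/2`. -/
theorem geometric_inequality
    (n : ℕ) (hn : 1 ≤ n) (β : ℝ) (hβ : β ∈ Set.Ioo (0 : ℝ) (n : ℝ)) :
    ∃ C > (0 : ℝ), ∀ (z : EuclideanSpace ℝ (Fin n)) (r : ℝ), 0 < r →
      ∀ x ∈ Metric.ball z r, ∀ E ⊆ Metric.ball z r, MeasurableSet E →
        0 < volume E → 2 * volume E < volume (Metric.ball z r) →
          ENNReal.ofReal (C * (volume E).toReal ^ (-(β / (n : ℝ)))) ≤
            ∫⁻ y in Metric.ball z r \ E,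
              ENNReal.ofReal (1 / dist x y ^ ((n : ℝ) + β)) := by
  have : Nonempty (Fin n) := ⟨⟨0, hn⟩⟩
  have hβn : -(n : ℝ) ≤ β := by linarith [hβ.1, n.cast_nonneg (α := ℝ)]
  rw [← finrank_euclideanSpace_fin (𝕜 := ℝ) (n := n)] at hβn
  obtain ⟨C, hC, h⟩ := geometric_inequality_general (volume : Measure _) hβn
  simp only [finrank_euclideanSpace_fin] at h
  exact ⟨C, hC, fun z r _ x hx E _ _ hE hEr ↦ h z r x (ball_subset_closedBall hx) E hE hEr.le⟩
end

section
/- Let n ≥ 1, β ∈ (0,n), λ > 0, and let φ be a Young function. Let (a_i)_{i∈ℤ} be a nonincreasing sequence of nonnegative reals with a_i = 0 for all sufficiently large i, and set d_i := a_i − a_{i+1} ≥ 0. Then Σ_{i∈ℤ, a_{i−1} ≠ 0} φ(2^{i−1}/λ) a_{i−1}^{−β/n} a_i ≤ 2 Σ_{i∈ℤ, a_{i−1} ≠ 0} φ(2^{i−1}/λ) a_{i−1}^{−β/n} d_i (the sums taken with values in [0,∞]). -/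
/-!
The indicators encode `∞ * 0 = 0`: if `a (i - 1) = 0` then `a i` and `a (i + 1)` vanish too, so
both sums run over all of `ℤ` with the `[0, ∞]`-valued weight
`w i = φ (2 ^ (i - 1) / λ) * a (i - 1) ^ (-s)`, where `s = β / n`. As `2 φ(t) ≤ φ(2t)` and `a` is
nonincreasing, `w i ≤ 2⁻¹ * w (i + 1)`. Since `a i` is the sum of the `d j` over `j ≥ i`, exchanging
the order of summation turns the left-hand side into the sum of `d j * (w j + w (j - 1) + ...)`,
whose inner series is at most `2 * w j`.
-/

open MeasureTheory Metric Set Filter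
open scoped ENNReal NNReal Topology Classical

theorem le_pow_mul_of_le_mul_succ {r : ℝ≥0∞} {w : ℤ → ℝ≥0∞} (hw : ∀ i, w i ≤ r * w (i + 1))
    (j : ℤ) (k : ℕ) : w (j - k) ≤ r ^ k * w j := by
  induction k with
  | zero => simp
  | succ k ih =>
    calc w (j - (k + 1 : ℕ)) ≤ r * w (j - (k + 1 : ℕ) + 1) := hw _
      _ = r * w (j - k) := by congr 2; push_cast; ring
      _ ≤ r * (r ^ k * w j) := by gcongr
      _ = r ^ (k + 1) * w j := by ring

theorem tsum_mul_tail_le {r : ℝ≥0∞} {w : ℤ → ℝ≥0∞} (hw : ∀ i, w i ≤ r * w (i + 1))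
    (d : ℤ → ℝ≥0∞) :
    ∑' i, w i * ∑' k : ℕ, d (i + k) ≤ (1 - r)⁻¹ * ∑' i, w i * d i := by
  have shift (k : ℕ) : ∑' i, w i * d (i + k) = ∑' j, w (j - k) * d j := by
    simpa using (Equiv.addRight (k : ℤ)).tsum_eq fun j => w (j - k) * d j
  calc ∑' i, w i * ∑' k : ℕ, d (i + k)
      = ∑' k : ℕ, ∑' j, w (j - k) * d j := by
        simp_rw [← ENNReal.tsum_mul_left, ← shift]
        exact ENNReal.tsum_comm
    _ ≤ ∑' k : ℕ, ∑' j, r ^ k * w j * d j := by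
        gcongr with k j
        exact le_pow_mul_of_le_mul_succ hw j k
    _ = (1 - r)⁻¹ * ∑' j, w j * d j := by
        simp_rw [mul_assoc, ENNReal.tsum_mul_left, ENNReal.tsum_mul_right, ENNReal.tsum_geometric]

theorem tsum_ofReal_sub_succ_of_antitone {b : ℕ → ℝ} {l : ℝ} (hb : Antitone b)
    (hlim : Tendsto b atTop (𝓝 l)) :
    ∑' k, ENNReal.ofReal (b k - b (k + 1)) = ENNReal.ofReal (b 0 - l) := by
  have diff_nonneg (k : ℕ) : 0 ≤ b k - b (k + 1) := sub_nonneg.2 (hb k.le_succ)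
  have hsum : HasSum (fun k => b k - b (k + 1)) (b 0 - l) := by
    rw [hasSum_iff_tendsto_nat_of_nonneg diff_nonneg]
    simpa only [Finset.sum_range_sub'] using hlim.const_sub (b 0)
  rw [← ENNReal.ofReal_tsum_of_nonneg diff_nonneg hsum.summable, hsum.tsum_eq]

theorem tsum_mul_ofReal_le_of_antitone {r : ℝ≥0∞} {w : ℤ → ℝ≥0∞} {a : ℤ → ℝ}
    (hw : ∀ i, w i ≤ r * w (i + 1)) (ha : Antitone a) (hlim : Tendsto a atTop (𝓝 0)) :
    ∑' i, w i * ENNReal.ofReal (a i) ≤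
      (1 - r)⁻¹ * ∑' i, w i * ENNReal.ofReal (a i - a (i + 1)) := by
  have tail_sum (i : ℤ) :
      ∑' k : ℕ, ENNReal.ofReal (a (i + k) - a (i + k + 1)) = ENNReal.ofReal (a i) := by
    have htail : Tendsto (fun k : ℕ => a (i + k)) atTop (𝓝 0) :=
      hlim.comp (tendsto_atTop_add_const_left _ i tendsto_natCast_atTop_atTop)
    have hanti : Antitone fun k : ℕ => a (i + k) := fun _ _ hkl => ha (by gcongr)
    simpa [add_assoc] using tsum_ofReal_sub_succ_of_antitone hanti htail
  simpa only [tail_sum] using tsum_mul_tail_le hw fun i => ENNReal.ofReal (a i - a (i + 1))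

theorem ennreal_rpow_neg_le_rpow_neg {x y : ℝ≥0∞} {s : ℝ} (hs : 0 ≤ s) (hxy : x ≤ y) :
    y ^ (-s) ≤ x ^ (-s) := by
  rw [ENNReal.rpow_neg, ENNReal.rpow_neg]
  gcongr

theorem indicator_ofReal_mul_rpow_neg_mul {ι : Type*} {c x b : ι → ℝ} (hc : ∀ i, 0 ≤ c i)
    (hx : ∀ i, 0 ≤ x i) (hb : ∀ i, x i = 0 → b i ≤ 0) (s : ℝ) (i : ι) :
    Set.indicator {i | x i ≠ 0} (fun i => ENNReal.ofReal (c i * x i ^ (-s) * b i)) i =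
      ENNReal.ofReal (c i) * ENNReal.ofReal (x i) ^ (-s) * ENNReal.ofReal (b i) := by
  by_cases hxi : x i = 0
  · simp [hxi, ENNReal.ofReal_of_nonpos (hb i hxi)]
  · have hpos : 0 < x i := (hx i).lt_of_ne' hxi
    rw [Set.indicator_of_mem (show i ∈ {i | x i ≠ 0} from hxi),
      ENNReal.ofReal_mul (mul_nonneg (hc i) (Real.rpow_nonneg (hx i) _)),
      ENNReal.ofReal_mul (hc i), ENNReal.ofReal_rpow_of_pos hpos]

theorem ofReal_dyadic_le_half_mul {φ : ℝ → ℝ} (hφ : ∀ t > 0, 2 * φ t ≤ φ (2 * t)) {lam : ℝ}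
    (hlam : 0 < lam) (i : ℤ) :
    ENNReal.ofReal (φ (2 ^ i / lam)) ≤ 2⁻¹ * ENNReal.ofReal (φ (2 ^ (i + 1) / lam)) := by
  have hdouble : 2 * φ (2 ^ i / lam) ≤ φ (2 ^ (i + 1) / lam) := by
    convert hφ (2 ^ i / lam) (by positivity) using 2
    rw [zpow_add_one₀ two_ne_zero]
    ring
  calc ENNReal.ofReal (φ (2 ^ i / lam))
      ≤ ENNReal.ofReal (2⁻¹ * φ (2 ^ (i + 1) / lam)) := ENNReal.ofReal_le_ofReal (by linarith)
    _ = 2⁻¹ * ENNReal.ofReal (φ (2 ^ (i + 1) / lam)) := by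
        rw [ENNReal.ofReal_mul (by norm_num), ENNReal.ofReal_inv_of_pos two_pos,
          ENNReal.ofReal_ofNat]

theorem IsYoung.two_mul_le {φ : ℝ → ℝ} (hφ : IsYoung φ) {t : ℝ} (ht : 0 ≤ t) :
    2 * φ t ≤ φ (2 * t) := by
  obtain ⟨-, hconv, hzero, -⟩ := hφ
  have hmid : φ (2⁻¹ * (2 * t)) ≤ 2⁻¹ * φ (2 * t) := by
    simpa [hzero] using hconv.2 (Set.mem_Ici.2 le_rfl) (Set.mem_Ici.2 (by positivity : 0 ≤ 2 * t))
      (by norm_num : (0 : ℝ) ≤ 2⁻¹) (by norm_num : (0 : ℝ) ≤ 2⁻¹) (by norm_num)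
  rw [inv_mul_cancel_left₀ two_ne_zero] at hmid
  linarith

theorem discrete_sum_lemma_general {s lam : ℝ} (hs : 0 ≤ s) (hlam : 0 < lam) {φ : ℝ → ℝ}
    (hφ_nonneg : ∀ t > 0, 0 ≤ φ t) (hφ_two_mul : ∀ t > 0, 2 * φ t ≤ φ (2 * t))
    {a : ℤ → ℝ} (ha : Antitone a) (hlim : Tendsto a atTop (𝓝 0)) :
    (∑' i : ℤ, Set.indicator {i : ℤ | a (i - 1) ≠ 0}
        (fun i => ENNReal.ofReal (φ ((2 : ℝ) ^ (i - 1) / lam) * a (i - 1) ^ (-s) * a i)) i) ≤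
      2 * ∑' i : ℤ, Set.indicator {i : ℤ | a (i - 1) ≠ 0}
        (fun i => ENNReal.ofReal
          (φ ((2 : ℝ) ^ (i - 1) / lam) * a (i - 1) ^ (-s) * (a i - a (i + 1)))) i := by
  have ha_nonneg (i : ℤ) : 0 ≤ a i := ha.le_of_tendsto hlim i
  have hφ_dyadic (i : ℤ) : 0 ≤ φ (2 ^ (i - 1) / lam) := hφ_nonneg _ (by positivity)
  have ha_nonpos (i : ℤ) (hi : a (i - 1) = 0) : a i ≤ 0 := (ha (by lia)).trans_eq hi
  have hd_nonpos (i : ℤ) (hi : a (i - 1) = 0) : a i - a (i + 1) ≤ 0 := by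
    linarith [ha_nonpos i hi, ha_nonneg (i + 1)]
  simp_rw [indicator_ofReal_mul_rpow_neg_mul hφ_dyadic (fun i => ha_nonneg (i - 1)) ha_nonpos,
    indicator_ofReal_mul_rpow_neg_mul hφ_dyadic (fun i => ha_nonneg (i - 1)) hd_nonpos]
  have weight_le (i : ℤ) :
      ENNReal.ofReal (φ (2 ^ (i - 1) / lam)) * ENNReal.ofReal (a (i - 1)) ^ (-s) ≤
        2⁻¹ * (ENNReal.ofReal (φ (2 ^ (i + 1 - 1) / lam)) *
          ENNReal.ofReal (a (i + 1 - 1)) ^ (-s)) := by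
    rw [← mul_assoc, add_sub_right_comm]
    exact mul_le_mul' (ofReal_dyadic_le_half_mul hφ_two_mul hlam (i - 1))
      (ennreal_rpow_neg_le_rpow_neg hs (ENNReal.ofReal_le_ofReal (ha (by lia))))
  simpa [ENNReal.one_sub_inv_two] using tsum_mul_ofReal_le_of_antitone weight_le ha hlim

/-- discrete summation lemma:
`Σ φ(2^{i-1}/λ) a_{i-1}^{-β/n} a_i ≤ 2 Σ φ(2^{i-1}/λ) a_{i-1}^{-β/n} d_i`. -/
theorem discrete_sum_lemma
    (n : ℕ) (hn : 1 ≤ n) (β : ℝ) (hβ : β ∈ Set.Ioo (0 : ℝ) (n : ℝ))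
    (lam : ℝ) (hlam : 0 < lam)
    (φ : ℝ → ℝ) (hφ : IsYoung φ)
    (a : ℤ → ℝ) (ha0 : ∀ i, 0 ≤ a i) (hmono : Antitone a)
    (hvanish : ∃ N : ℤ, ∀ i ≥ N, a i = 0) :
    (∑' i : ℤ, Set.indicator {i : ℤ | a (i - 1) ≠ 0}
        (fun i => ENNReal.ofReal
          (φ ((2 : ℝ) ^ (i - 1) / lam) * a (i - 1) ^ (-(β / (n : ℝ))) * a i)) i) ≤
      2 * ∑' i : ℤ, Set.indicator {i : ℤ | a (i - 1) ≠ 0}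
        (fun i => ENNReal.ofReal
          (φ ((2 : ℝ) ^ (i - 1) / lam) * a (i - 1) ^ (-(β / (n : ℝ))) *
            (a i - a (i + 1)))) i := by
  obtain ⟨N, hN⟩ := hvanish
  exact discrete_sum_lemma_general (div_nonneg hβ.1.le n.cast_nonneg) hlam
    (fun t ht => (hφ.2.2.2 t ht).le) (fun _ ht => hφ.two_mul_le ht.le) hmono
    (tendsto_atTop_of_eventually_const hN)
end
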